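/- For every n ≥ 4, the orbit space C_n(ℂ)/(ℂ⋊ℂ*) is not a topological manifold: the point p given by the class of the configuration of the n roots of the polynomial z^n + 1 admits no open neighborhood homeomorphic to an open subset of ℝ^m for any m ∈ ℕ. In the paper's notation, M_{0,n+1}/Σ_n is not a topological manifold for n ≥ 4. -/

import Mathlib

open Complex Topology

/-- Ordered configuration space of `n` points in the subset `X ⊆ ℂ`. -/
abbrev OrdConfig (n : ℕ) (X : Set ℂ) : Type :=
  {f : Fin n → ℂ // Function.Injective f ∧ ∀ i, f i ∈ X}

/-- Two ordered configurations are related if they differ by a permutation of labels. -/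
def permRel (n : ℕ) (X : Set ℂ) (f g : OrdConfig n X) : Prop :=
  ∃ σ : Equiv.Perm (Fin n), g.1 = f.1 ∘ σ

/-- The unordered configuration space `C_n(X)` with the quotient topology. -/
abbrev UConfig (n : ℕ) (X : Set ℂ) : Type := Quot (permRel n X)

/-- The affine group relation on unordered configurations: `d` is obtained from `c` by
applying `z ↦ b z + a` with `b ≠ 0` to every point. -/
def affRel (n : ℕ) (c d : UConfig n Set.univ) : Prop :=
  ∃ a b : ℂ, b ≠ 0 ∧ ∃ f g : OrdConfig n Set.univ,
    Quot.mk _ f = c ∧ Quot.mk _ g = d ∧ ∀ i, g.1 i = b * f.1 i + a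

/-- `C_n(ℂ)/(ℂ⋊ℂ*)`, the orbit space with the quotient topology. -/
abbrev ConfigModAff (n : ℕ) : Type := Quot (affRel n)

/-!
Near a polynomial whose affine symmetries are exactly the `g`-th roots of unity `μ_g`, the orbit
space is the product of the space `ℂᵗ` of fixed modes with the quotient of the free modes by `μ_g`.
Sending `(x, c)` to the fixed modes `x` and to a `g`-th root of `c` as the first free mode is well
defined in this quotient, and gives a continuous map from a cube of dimension `2t + 2`. Since points
of the orbit space with trivial symmetry have charts of dimension greater than `2t + 2`, a chart at
the polynomial does too, and a perturbation fixing the boundary of the cube makes the map miss the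
polynomial. The preimage of its fixed modes then avoids the branch point of the `μ_g`-covering given
by suitable powers of the free modes, all rotated by `μ_g` with the same weight `w`. As a relative
`2`-cycle, obtained by slicing the fundamental chain of the cube, it bounds the circle of values of
`c`, so the holonomy `exp (2πi w / g)` of the covering along this circle is trivial, although `g`
does not divide `w`.
-/

/-- A cell of the standard cubical subdivision of `ℝᴺ`: in each coordinate either a vertex,
`(v, false)`, or an edge `[v, v + 1]`, `(v, true)`. -/
abbrev GridCell (N : ℕ) : Type := Fin N → ℤ × Bool

/-- Integral cubical chains of `ℝᴺ`. -/
abbrev GridChain (N : ℕ) : Type := GridCell N →₀ ℤ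

namespace GridCell

variable {N : ℕ}

/-- The product of a cell of `ℝ` with a cell of `ℝᴺ`. -/
abbrev cons (x : ℤ × Bool) (c : GridCell N) : GridCell (N + 1) := Fin.cons x c

/-- The lower corner of a cell. -/
def base (c : GridCell N) : Fin N → ℤ := fun i => (c i).1

/-- The upper corner of a cell. -/
def top (c : GridCell N) : Fin N → ℤ := fun i => if (c i).2 then (c i).1 + 1 else (c i).1

/-- The dimension of a cell. -/
def dim (c : GridCell N) : ℕ := ∑ i, if (c i).2 then 1 else 0

/-- `d.IsFace c` says that the closed cell `d` is contained in `c`; this includes `d = c`. -/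
def IsFace (d c : GridCell N) : Prop :=
  ∀ i, d i = c i ∨ (c i).2 = true ∧ (d i).2 = false ∧ ((d i).1 = (c i).1 ∨ (d i).1 = (c i).1 + 1)

theorem base_cons (x : ℤ × Bool) (c : GridCell N) :
    (cons x c).base = Fin.cons x.1 c.base := by
  ext i; cases i using Fin.cases <;> rfl

theorem top_cons (x : ℤ × Bool) (c : GridCell N) :
    (cons x c).top = Fin.cons (if x.2 then x.1 + 1 else x.1) c.top := by
  ext i; cases i using Fin.cases <;> rfl

theorem dim_cons (x : ℤ × Bool) (c : GridCell N) :
    (cons x c).dim = (if x.2 then 1 else 0) + c.dim := by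
  simp only [dim, Fin.sum_univ_succ, Fin.cons_zero, Fin.cons_succ]

theorem top_eq_base_of_dim_eq_zero {c : GridCell N} (h : c.dim = 0) : c.top = c.base := by
  funext i
  have hi : (if (c i).2 then 1 else 0) = 0 :=
    (Finset.sum_eq_zero_iff (f := fun i => if (c i).2 then 1 else 0)).1 h i (Finset.mem_univ i)
  have : (c i).2 = false := by simpa using hi
  simp [top, base, this]

theorem IsFace.refl (c : GridCell N) : c.IsFace c := fun _ => Or.inl rfl

theorem IsFace.trans {a b c : GridCell N} (hab : a.IsFace b) (hbc : b.IsFace c) : a.IsFace c := by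
  intro i
  have h₁ := hab i
  have h₂ := hbc i
  grind

theorem IsFace.cons {x y : ℤ × Bool} {c d : GridCell N}
    (hxy : x = y ∨ y.2 = true ∧ x.2 = false ∧ (x.1 = y.1 ∨ x.1 = y.1 + 1)) (h : d.IsFace c) :
    (cons x d).IsFace (cons y c) :=
  Fin.cases hxy h

end GridCell

namespace GridChain

open GridCell

variable {N : ℕ}

theorem hom_ext {R : Type*} [AddCommGroup R] {f g : GridChain N →ₗ[ℤ] R}
    (h : ∀ c, f (Finsupp.single c 1) = g (Finsupp.single c 1)) : f = g :=
  Finsupp.lhom_ext' fun c => LinearMap.ext_ring (h c)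

/-- The product of a cell of `ℝ` with a chain of `ℝᴺ`. -/
noncomputable def cons (x : ℤ × Bool) : GridChain N →ₗ[ℤ] GridChain (N + 1) :=
  Finsupp.lmapDomain ℤ ℤ (GridCell.cons x)

@[simp] theorem cons_single (x : ℤ × Bool) (c : GridCell N) :
    cons x (Finsupp.single c 1) = Finsupp.single (GridCell.cons x c) 1 := by
  simp [cons]

/-- The boundary of a cell. -/
noncomputable def cellBoundary : {N : ℕ} → GridCell N → GridChain N
  | 0, _ => 0
  | _ + 1, c =>
    (if (c 0).2 then
      Finsupp.single (GridCell.cons ((c 0).1 + 1, false) (Fin.tail c)) 1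
        - Finsupp.single (GridCell.cons ((c 0).1, false) (Fin.tail c)) 1
        - cons (c 0) (cellBoundary (Fin.tail c))
    else cons (c 0) (cellBoundary (Fin.tail c)))

/-- The cubical boundary operator. -/
noncomputable def boundary : GridChain N →ₗ[ℤ] GridChain N :=
  Finsupp.linearCombination ℤ cellBoundary

@[simp] theorem boundary_single (c : GridCell N) :
    boundary (Finsupp.single c 1) = cellBoundary c := by
  simp [boundary]

@[simp] theorem cellBoundary_cons_false (v : ℤ) (c : GridCell N) :
    cellBoundary (GridCell.cons (v, false) c) = cons (v, false) (cellBoundary c) := by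
  simp [cellBoundary]

@[simp] theorem cellBoundary_cons_true (v : ℤ) (c : GridCell N) :
    cellBoundary (GridCell.cons (v, true) c) =
      Finsupp.single (GridCell.cons (v + 1, false) c) 1
        - Finsupp.single (GridCell.cons (v, false) c) 1 - cons (v, true) (cellBoundary c) := by
  simp [cellBoundary]

theorem boundary_cons_false (v : ℤ) (x : GridChain N) :
    boundary (cons (v, false) x) = cons (v, false) (boundary x) :=
  LinearMap.congr_fun (f := boundary ∘ₗ cons (v, false)) (g := cons (v, false) ∘ₗ boundary)
    (hom_ext fun c => by simp) x

theorem boundary_cons_true (v : ℤ) (x : GridChain N) :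
    boundary (cons (v, true) x) =
      cons (v + 1, false) x - cons (v, false) x - cons (v, true) (boundary x) :=
  LinearMap.congr_fun (f := boundary ∘ₗ cons (v, true))
    (g := cons (v + 1, false) - cons (v, false) - cons (v, true) ∘ₗ boundary)
    (hom_ext fun c => by simp) x

theorem boundary_cellBoundary : ∀ {N : ℕ} (c : GridCell N), boundary (cellBoundary c) = 0
  | 0, _ => by simp [cellBoundary]
  | _ + 1, c => by
    cases c using Fin.consCases with
    | cons x c =>
      obtain ⟨v, _ | _⟩ := x
      · simp [boundary_cons_false, boundary_cellBoundary c]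
      · simp [boundary_cons_true, boundary_cellBoundary c]

theorem boundary_boundary (x : GridChain N) : boundary (boundary x) = 0 :=
  LinearMap.congr_fun (f := boundary ∘ₗ boundary) (g := 0)
    (hom_ext fun c => by simp [boundary_cellBoundary]) x

/-- The chains supported on the cells in `S`. -/
abbrev supportedOn (S : Set (GridCell N)) : Submodule ℤ (GridChain N) := Finsupp.supported ℤ ℤ S

theorem single_mem_supportedOn {S : Set (GridCell N)} {c : GridCell N} (h : c ∈ S) :
    Finsupp.single c 1 ∈ supportedOn S :=
  Finsupp.single_mem_supported ℤ 1 h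

theorem map_mem_of_mem_supportedOn {R : Type*} [AddCommGroup R] {S : Set (GridCell N)}
    {f : GridChain N →ₗ[ℤ] R} {T : Submodule ℤ R} (h : ∀ c ∈ S, f (Finsupp.single c 1) ∈ T)
    {x : GridChain N} (hx : x ∈ supportedOn S) : f x ∈ T := by
  suffices supportedOn S ≤ T.comap f from this hx
  rw [supportedOn, Finsupp.supported_eq_span_single, Submodule.span_le]
  rintro _ ⟨c, hc, rfl⟩
  exact h c hc

theorem eq_of_mem_supportedOn {R : Type*} [AddCommGroup R] {S : Set (GridCell N)}
    {f g : GridChain N →ₗ[ℤ] R} (h : ∀ c ∈ S, f (Finsupp.single c 1) = g (Finsupp.single c 1))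
    {x : GridChain N} (hx : x ∈ supportedOn S) : f x = g x := by
  have : (f - g) x ∈ (⊥ : Submodule ℤ R) :=
    map_mem_of_mem_supportedOn (fun c hc => by simp [h c hc]) hx
  simpa [sub_eq_zero] using this

theorem cons_mem_supportedOn {S : Set (GridCell N)} {T : Set (GridCell (N + 1))} {y : ℤ × Bool}
    (h : ∀ c ∈ S, GridCell.cons y c ∈ T) {x : GridChain N} (hx : x ∈ supportedOn S) :
    cons y x ∈ supportedOn T :=
  map_mem_of_mem_supportedOn (fun c hc => by simpa using single_mem_supportedOn (h c hc)) hx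

theorem cellBoundary_mem_supportedOn :
    ∀ {N : ℕ} (c : GridCell N), cellBoundary c ∈ supportedOn {d | d.IsFace c}
  | 0, _ => by simp [cellBoundary]
  | _ + 1, c => by
    cases c using Fin.consCases with
    | cons x c =>
      have hcons : cons x (cellBoundary c) ∈ supportedOn {d | d.IsFace (Fin.cons x c)} :=
        cons_mem_supportedOn (fun _ hd => .cons (.inl rfl) hd) (cellBoundary_mem_supportedOn c)
      obtain ⟨v, _ | _⟩ := x
      · simpa using hcons
      · rw [cellBoundary_cons_true]
        exact sub_mem (sub_mem
          (single_mem_supportedOn (.cons (.inr (by simp)) (.refl c)))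
          (single_mem_supportedOn (.cons (.inr (by simp)) (.refl c)))) hcons

/-- A set of cells that contains the faces of its members. -/
def FaceClosed (S : Set (GridCell N)) : Prop := ∀ ⦃c d⦄, c ∈ S → d.IsFace c → d ∈ S

theorem boundary_mem_supportedOn {S : Set (GridCell N)} (hS : FaceClosed S) {x : GridChain N}
    (hx : x ∈ supportedOn S) : boundary x ∈ supportedOn S :=
  map_mem_of_mem_supportedOn (fun c hc => by
    simpa using Finsupp.supported_mono (fun _ hd => hS hc hd) (cellBoundary_mem_supportedOn c)) hx

open Classical in
/-- The part of a chain on the cells whose lower corner satisfies `p`. -/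
noncomputable def restrict (p : (Fin N → ℤ) → Prop) : GridChain N →ₗ[ℤ] GridChain N :=
  Finsupp.linearCombination ℤ fun c => if p c.base then Finsupp.single c 1 else 0

open Classical in
@[simp] theorem restrict_single (p : (Fin N → ℤ) → Prop) (c : GridCell N) :
    restrict p (Finsupp.single c 1) = if p c.base then Finsupp.single c 1 else 0 := by
  simp [restrict]

theorem restrict_cons (p : (Fin (N + 1) → ℤ) → Prop) (x : ℤ × Bool) (c : GridChain N) :
    restrict p (cons x c) = cons x (restrict (fun l => p (Fin.cons x.1 l)) c) :=
  LinearMap.congr_fun (f := restrict p ∘ₗ cons x)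
    (g := cons x ∘ₗ restrict fun l => p (Fin.cons x.1 l))
    (hom_ext fun c => by
      by_cases h : p (Fin.cons x.1 c.base) <;> simp [base_cons, h]) c

theorem restrict_of_forall {p : (Fin N → ℤ) → Prop} (h : ∀ l, p l) (c : GridChain N) :
    restrict p c = c :=
  LinearMap.congr_fun (g := LinearMap.id) (hom_ext fun c => by simp [h]) c

theorem restrict_of_forall_not {p : (Fin N → ℤ) → Prop} (h : ∀ l, ¬p l) (c : GridChain N) :
    restrict p c = 0 :=
  LinearMap.congr_fun (g := 0) (hom_ext fun c => by simp [h]) c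

/-- The slice of a chain along the frontier of the region `p`. -/
noncomputable def slice (p : (Fin N → ℤ) → Prop) : GridChain N →ₗ[ℤ] GridChain N :=
  boundary ∘ₗ restrict p - restrict p ∘ₗ boundary

theorem slice_apply (p : (Fin N → ℤ) → Prop) (x : GridChain N) :
    slice p x = boundary (restrict p x) - restrict p (boundary x) := rfl

theorem boundary_slice (p : (Fin N → ℤ) → Prop) (x : GridChain N) :
    boundary (slice p x) = -slice p (boundary x) := by
  simp [slice_apply, boundary_boundary]

theorem slice_cons_false (p : (Fin (N + 1) → ℤ) → Prop) (v : ℤ) (x : GridChain N) :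
    slice p (cons (v, false) x) = cons (v, false) (slice (fun l => p (Fin.cons v l)) x) := by
  simp [slice_apply, restrict_cons, boundary_cons_false]

theorem slice_single_mem_supportedOn (p : (Fin N → ℤ) → Prop) (c : GridCell N) :
    slice p (Finsupp.single c 1) ∈ supportedOn {d | d.IsFace c ∧ ¬(p d.base ↔ p c.base)} := by
  classical
  have hface : ∀ d, d.IsFace c → (if p c.base then Finsupp.single d 1 else 0)
      - restrict p (Finsupp.single d 1) ∈
        supportedOn {d | d.IsFace c ∧ ¬(p d.base ↔ p c.base)} := by
    intro d hd
    by_cases hc : p c.base <;> by_cases hd' : p d.base <;> simp only [restrict_single, hc, hd',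
      if_true, if_false, sub_self, zero_mem, sub_zero, zero_sub, neg_mem_iff]
    · exact single_mem_supportedOn ⟨hd, by simp [hd']⟩
    · exact single_mem_supportedOn ⟨hd, by simp [hd']⟩
  have := map_mem_of_mem_supportedOn
    (f := (if p c.base then LinearMap.id else 0) - restrict p)
    (fun d hd => by simpa [apply_ite DFunLike.coe, ite_apply] using hface d hd)
    (cellBoundary_mem_supportedOn c)
  by_cases hc : p c.base <;> simpa [slice_apply, hc] using this

theorem slice_mem_supportedOn (p : (Fin N → ℤ) → Prop) {S : Set (GridCell N)} {x : GridChain N}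
    (hx : x ∈ supportedOn S) :
    slice p x ∈ supportedOn {d | ∃ c ∈ S, d.IsFace c ∧ ¬(p d.base ↔ p c.base)} :=
  map_mem_of_mem_supportedOn (fun c hc =>
    Finsupp.supported_mono (fun d hd => by exact ⟨c, hc, hd⟩)
      (slice_single_mem_supportedOn p c)) hx

theorem slice_congr {p q : (Fin N → ℤ) → Prop} {S : Set (GridCell N)} (hS : FaceClosed S)
    (h : ∀ c ∈ S, (p c.base ↔ q c.base)) {x : GridChain N} (hx : x ∈ supportedOn S) :
    slice p x = slice q x := by
  have hrestrict : ∀ y ∈ supportedOn S, restrict p y = restrict q y :=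
    fun y hy =>
    eq_of_mem_supportedOn (fun c hc => by by_cases hq : q c.base <;> simp [h c hc, hq]) hy
  rw [slice_apply, slice_apply, hrestrict x hx, hrestrict _ (boundary_mem_supportedOn hS hx)]

/-- The iterated slice along the frontiers of the regions `p 0, …, p (s - 1)`. -/
noncomputable def iterSlice :
    {s : ℕ} → (Fin s → (Fin N → ℤ) → Prop) → GridChain N →ₗ[ℤ] GridChain N
  | 0, _ => LinearMap.id
  | _ + 1, p => iterSlice (Fin.tail p) ∘ₗ slice (p 0)

theorem boundary_iterSlice : ∀ {s : ℕ} (p : Fin s → (Fin N → ℤ) → Prop) (x : GridChain N),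
    boundary (iterSlice p x) = (-1 : ℤ) ^ s • iterSlice p (boundary x)
  | 0, _, _ => by simp [iterSlice]
  | s + 1, p, x => by simp [iterSlice, boundary_iterSlice, boundary_slice, pow_succ]

theorem iterSlice_cons_false : ∀ {s : ℕ} (p : Fin s → (Fin (N + 1) → ℤ) → Prop) (v : ℤ)
    (x : GridChain N),
    iterSlice p (cons (v, false) x) =
      cons (v, false) (iterSlice (fun i l => p i (Fin.cons v l)) x)
  | 0, _, _, _ => rfl
  | _ + 1, p, v, x => by
    simp only [iterSlice, LinearMap.comp_apply, slice_cons_false, iterSlice_cons_false]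
    rfl

theorem iterSlice_mem_supportedOn : ∀ {s : ℕ} (p : Fin s → (Fin N → ℤ) → Prop)
    {S : Set (GridCell N)} (_ : FaceClosed S) {x : GridChain N} (_ : x ∈ supportedOn S),
    iterSlice p x ∈ supportedOn {d | d ∈ S ∧ ∀ i, ∃ c ∈ S, d.IsFace c ∧
      ∃ e : GridCell N, e.IsFace c ∧ ¬(p i e.base ↔ p i c.base)}
  | 0, _, _, _, _, hx => by simpa [iterSlice] using hx
  | s + 1, p, S, hS, x, hx => by
    set S₀ : Set (GridCell N) := {d | d ∈ S ∧ ∃ c ∈ S, d.IsFace c ∧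
      ∃ e : GridCell N, e.IsFace c ∧ ¬(p 0 e.base ↔ p 0 c.base)}
    have hS₀ : FaceClosed S₀ := by
      rintro c d ⟨hc, c', hc', hcc', hsep⟩ hdc
      exact ⟨hS hc hdc, c', hc', hdc.trans hcc', hsep⟩
    have hslice : slice (p 0) x ∈ supportedOn S₀ := by
      refine Finsupp.supported_mono ?_ (slice_mem_supportedOn (p 0) hx)
      rintro d ⟨c, hc, hdc, hsep⟩
      exact ⟨hS hc hdc, c, hc, hdc, d, hdc, hsep⟩
    refine Finsupp.supported_mono ?_ (iterSlice_mem_supportedOn (Fin.tail p) hS₀ hslice)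
    rintro d ⟨⟨hd, hd₀⟩, hsep⟩
    refine ⟨hd, Fin.cases hd₀ fun i => ?_⟩
    obtain ⟨c, hc, hdc⟩ := hsep i
    exact ⟨c, hc.1, hdc⟩

theorem iterSlice_congr : ∀ {s : ℕ} {p q : Fin s → (Fin N → ℤ) → Prop} {S : Set (GridCell N)}
    (_ : FaceClosed S) (_ : ∀ i, ∀ c ∈ S, (p i c.base ↔ q i c.base)) {x : GridChain N}
    (_ : x ∈ supportedOn S), iterSlice p x = iterSlice q x
  | 0, _, _, _, _, _, _, _ => rfl
  | s + 1, p, q, S, hS, h, x, hx => by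
    simp only [iterSlice, LinearMap.comp_apply, slice_congr hS (h 0) hx]
    refine iterSlice_congr hS (fun i => h i.succ) ?_
    refine Finsupp.supported_mono ?_ (slice_mem_supportedOn (q 0) hx)
    rintro d ⟨c, hc, hdc, _⟩
    exact hS hc hdc

/-- The fundamental chain of the cube `[-M, M]ᴺ`. -/
noncomputable def cube (M : ℤ) : (N : ℕ) → GridChain N
  | 0 => Finsupp.single ![] 1
  | N + 1 => ∑ v ∈ Finset.Ico (-M) M, cons (v, true) (cube M N)

theorem boundary_sum_cons_true (x : GridChain N) {a b : ℤ} (hab : a ≤ b) :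
    boundary (∑ v ∈ Finset.Ico a b, cons (v, true) x) =
      cons (b, false) x - cons (a, false) x
        - ∑ v ∈ Finset.Ico a b, cons (v, true) (boundary x) := by
  have htelescope : ∑ v ∈ Finset.Ico a b, (cons (v + 1, false) x - cons (v, false) x) =
      cons (b, false) x - cons (a, false) x := by
    induction b, hab using Int.leInduction with
    | base => simp
    | succ b hab ih =>
      rw [← Order.succ_eq_add_one b, ← Finset.insert_Ico_right_eq_Ico_succ hab,
        Finset.sum_insert (by simp), ih, Order.succ_eq_add_one]
      abel
  simp only [map_sum, boundary_cons_true, Finset.sum_sub_distrib, ← htelescope]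

theorem slice_cube {M : ℤ} (hM : 1 ≤ M) (N : ℕ) :
    slice (fun l => 0 < l 0) (cube M (N + 1)) = -cons (1, false) (cube M N) := by
  have hrestrict : ∀ x : GridChain N, restrict (fun l => 0 < l 0)
      (∑ v ∈ Finset.Ico (-M) M, cons (v, true) x) = ∑ v ∈ Finset.Ico 1 M, cons (v, true) x := by
    intro x
    rw [map_sum, ← Finset.sum_subset (Finset.Ico_subset_Ico_left (by lia : -M ≤ 1))]
    · refine Finset.sum_congr rfl fun v hv => ?_
      rw [restrict_cons, restrict_of_forall]
      simp only [Finset.mem_Ico] at hv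
      simp only [Fin.cons_zero]
      lia
    · intro v _ hv
      rw [restrict_cons, restrict_of_forall_not, map_zero]
      simp only [Finset.mem_Ico] at *
      simp only [Fin.cons_zero]
      lia
  rw [slice_apply, cube, hrestrict, boundary_sum_cons_true _ hM,
    boundary_sum_cons_true _ (by lia), map_sub, map_sub, hrestrict, restrict_cons, restrict_cons,
    restrict_of_forall (by simp; lia), restrict_of_forall_not (by simp; lia)]
  simp

/-- The slice of `ℝˢ × ℝ²` at height `(1, …, 1)`: the cell `{(1, …, 1)} × c`. -/
def _root_.GridCell.atOnes (s : ℕ) (c : GridCell 2) : GridCell (s + 2) :=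
  Fin.append (fun _ => (1, false)) c

theorem _root_.GridCell.atOnes_zero (c : GridCell 2) : c.atOnes 0 = c := by
  funext i
  exact (Fin.append_right _ c i ▸ congrArg _ (Fin.ext (by simp)) : c.atOnes 0 i = c i)

theorem _root_.GridCell.atOnes_succ (s : ℕ) (c : GridCell 2) :
    c.atOnes (s + 1) = GridCell.cons (1, false) (c.atOnes s) := by
  refine funext (Fin.cases rfl fun i => ?_)
  change c.atOnes (s + 1) i.succ = c.atOnes s i
  induction i using Fin.addCases with
  | left i =>
    exact (Fin.append_left _ c i.succ).trans (Fin.append_left (fun _ => (1, false)) c i).symm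
  | right j =>
    have hj : (Fin.natAdd s j).succ = Fin.natAdd (s + 1) j := Fin.ext (by simp; lia)
    exact (congrArg _ hj).trans ((Fin.append_right _ c j).trans (Fin.append_right _ c j).symm)

/-- The chain `{(1, …, 1)} × x` of `ℝˢ × ℝ²`. -/
noncomputable def atOnes (s : ℕ) : GridChain 2 →ₗ[ℤ] GridChain (s + 2) :=
  Finsupp.lmapDomain ℤ ℤ (GridCell.atOnes s)

@[simp] theorem atOnes_single (s : ℕ) (c : GridCell 2) :
    atOnes s (Finsupp.single c 1) = Finsupp.single (GridCell.atOnes s c) 1 := by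
  simp [atOnes]

theorem atOnes_succ (s : ℕ) (x : GridChain 2) :
    atOnes (s + 1) x = cons (1, false) (atOnes s x) :=
  LinearMap.congr_fun (g := cons (1, false) ∘ₗ atOnes s)
    (hom_ext fun c => by simp [GridCell.atOnes_succ]) x

theorem boundary_atOnes : ∀ (s : ℕ) (x : GridChain 2),
    boundary (atOnes s x) = atOnes s (boundary x)
  | 0, x => by
    have : atOnes 0 = LinearMap.id := hom_ext fun c => by simp [atOnes_zero]
    simp [this]
  | s + 1, x => by rw [atOnes_succ, boundary_cons_false, boundary_atOnes s, atOnes_succ]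

theorem iterSlice_cube {M : ℤ} (hM : 1 ≤ M) : ∀ s : ℕ,
    iterSlice (fun i l => 0 < l (Fin.castAdd 2 i)) (cube M (s + 2)) =
      (-1 : ℤ) ^ s • atOnes s (cube M 2)
  | 0 => by
    have : atOnes 0 = LinearMap.id := hom_ext fun c => by simp [atOnes_zero]
    simp [this, iterSlice]
  | s + 1 => by
    have hslice : slice (fun l => 0 < l (Fin.castAdd 2 0)) (cube M (s + 1 + 2)) =
        -cons (1, false) (cube M (s + 2)) := slice_cube hM (s + 2)
    rw [iterSlice, LinearMap.comp_apply, hslice, map_neg, iterSlice_cons_false]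
    refine (congrArg (fun x => -cons (1, false) x) (iterSlice_cube hM s)).trans ?_
    rw [map_smul, ← atOnes_succ, pow_succ, mul_neg_one, neg_smul]

/-- The cells of the cube `[-M, M]ᴺ`. -/
def cubeCells (M : ℤ) (N : ℕ) : Set (GridCell N) := {c | ∀ i, -M ≤ c.base i ∧ c.top i ≤ M}

/-- The cells of the boundary of the cube `[-M, M]ᴺ`. -/
def sphereCells (M : ℤ) (N : ℕ) : Set (GridCell N) :=
  {c | c ∈ cubeCells M N ∧ ∃ i, (c i).2 = false ∧ ((c i).1 = M ∨ (c i).1 = -M)}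

theorem faceClosed_cubeCells (M : ℤ) (N : ℕ) : FaceClosed (cubeCells M N) := by
  intro c d hc hdc i
  have h₁ := hc i
  have h₂ := hdc i
  simp only [base, top] at h₁ ⊢
  grind

theorem faceClosed_sphereCells (M : ℤ) (N : ℕ) : FaceClosed (sphereCells M N) := by
  rintro c d ⟨hc, i, hi⟩ hdc
  refine ⟨faceClosed_cubeCells M N hc hdc, i, ?_⟩
  have h₂ := hdc i
  grind

theorem cons_mem_cubeCells {M : ℤ} {x : ℤ × Bool}
    (hx : -M ≤ x.1 ∧ (if x.2 then x.1 + 1 else x.1) ≤ M) {c : GridCell N}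
    (hc : c ∈ cubeCells M N) : GridCell.cons x c ∈ cubeCells M (N + 1) :=
  Fin.cases hx hc

theorem cube_mem_supportedOn (M : ℤ) : ∀ N : ℕ, cube M N ∈ supportedOn (cubeCells M N)
  | 0 => single_mem_supportedOn fun i => i.elim0
  | N + 1 => sum_mem fun v hv => cons_mem_supportedOn (fun _ hc => cons_mem_cubeCells (by
      simp only [Finset.mem_Ico] at hv; simp only [if_true]; lia) hc) (cube_mem_supportedOn M N)

theorem boundary_cube_mem_supportedOn {M : ℤ} (hM : 0 ≤ M) :
    ∀ N : ℕ, boundary (cube M N) ∈ supportedOn (sphereCells M N)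
  | 0 => by simp [cube, cellBoundary]
  | N + 1 => by
    have hface : ∀ v, v = M ∨ v = -M →
        cons (v, false) (cube M N) ∈ supportedOn (sphereCells M (N + 1)) := by
      refine fun v hv => cons_mem_supportedOn (S := cubeCells M N) (fun c hc => ?_)
        (cube_mem_supportedOn M N)
      refine ⟨cons_mem_cubeCells ?_ hc, 0, rfl, hv⟩
      simp only [Bool.false_eq_true, if_false]
      lia
    rw [cube, boundary_sum_cons_true _ (by lia)]
    refine sub_mem (sub_mem (hface M (.inl rfl)) (hface (-M) (.inr rfl))) (sum_mem fun v hv => ?_)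
    refine cons_mem_supportedOn (S := sphereCells M N) ?_ (boundary_cube_mem_supportedOn hM N)
    rintro c ⟨hc, i, hi⟩
    refine ⟨cons_mem_cubeCells ?_ hc, i.succ, hi⟩
    simp only [Finset.mem_Ico] at hv
    simp only [if_true]
    lia

section Cochains

variable {R : Type*} [AddCommGroup R]

/-- The pairing of a cochain, given by its values on cells, with chains. -/
noncomputable def pairing (φ : GridCell N → R) : GridChain N →ₗ[ℤ] R :=
  Finsupp.linearCombination ℤ φ

@[simp] theorem pairing_single (φ : GridCell N → R) (c : GridCell N) :
    pairing φ (Finsupp.single c 1) = φ c := by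
  simp [pairing]

theorem pairing_cons (φ : GridCell (N + 1) → R) (x : ℤ × Bool) (c : GridChain N) :
    pairing φ (cons x c) = pairing (fun d => φ (GridCell.cons x d)) c :=
  LinearMap.congr_fun (f := pairing φ ∘ₗ cons x) (hom_ext fun c => by simp) c

theorem pairing_atOnes {s : ℕ} (φ : GridCell (s + 2) → R) (x : GridChain 2) :
    pairing φ (atOnes s x) = pairing (fun d => φ (d.atOnes s)) x :=
  LinearMap.congr_fun (f := pairing φ ∘ₗ atOnes s) (hom_ext fun c => by simp) x

/-- The `1`-cochain whose value on an edge is the value of `μ` on its end points. -/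
def edgeCochain (μ : (Fin N → ℤ) → (Fin N → ℤ) → R) (c : GridCell N) : R :=
  if c.dim = 1 then μ c.base c.top else 0

/-- The `0`-cochain with the values `ψ` on the vertices. -/
def vertexCochain (ψ : (Fin N → ℤ) → R) (c : GridCell N) : R :=
  if c.dim = 0 then ψ c.base else 0

theorem pairing_vertexCochain_cellBoundary : ∀ {N : ℕ} (ψ : (Fin N → ℤ) → R) (c : GridCell N),
    pairing (vertexCochain ψ) (cellBoundary c) = edgeCochain (fun v w => ψ w - ψ v) c
  | 0, ψ, c => by simp [cellBoundary, edgeCochain, dim]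
  | N + 1, ψ, c => by
    cases c using Fin.consCases with
    | cons x c =>
      obtain ⟨v, _ | _⟩ := x
      · have hcons : (fun d : GridCell N => vertexCochain ψ (GridCell.cons (v, false) d)) =
            vertexCochain fun l => ψ (Fin.cons v l) := by
          funext d; simp [vertexCochain, dim_cons, base_cons]
        rw [cellBoundary_cons_false, pairing_cons, hcons, pairing_vertexCochain_cellBoundary]
        simp [edgeCochain, dim_cons, base_cons, top_cons]
      · have hcons : (fun d : GridCell N => vertexCochain ψ (GridCell.cons (v, true) d)) = 0 := by
          funext d; simp [vertexCochain, dim_cons]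
        rw [cellBoundary_cons_true, map_sub, map_sub, pairing_cons, hcons]
        by_cases hc : dim c = 0 <;>
          simp [vertexCochain, edgeCochain, dim_cons, base_cons, top_cons, hc, pairing,
            top_eq_base_of_dim_eq_zero]

theorem pairing_cellBoundary_eq_zero {μ : (Fin N → ℤ) → (Fin N → ℤ) → R} {c : GridCell N}
    (h : ∃ ψ : (Fin N → ℤ) → R, ∀ d : GridCell N,
      d.IsFace c → μ d.base d.top = ψ d.top - ψ d.base) :
    pairing (edgeCochain μ) (cellBoundary c) = 0 := by
  obtain ⟨ψ, hψ⟩ := h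
  calc pairing (edgeCochain μ) (cellBoundary c)
      = pairing (vertexCochain ψ) (boundary (cellBoundary c)) :=
        eq_of_mem_supportedOn (g := pairing (vertexCochain ψ) ∘ₗ boundary) (fun d hd => by
          simp [pairing_vertexCochain_cellBoundary, edgeCochain, hψ d hd])
          (cellBoundary_mem_supportedOn c)
    _ = 0 := by rw [boundary_cellBoundary, map_zero]

theorem pairing_boundary_cube_two {M : ℤ} (hM : 1 ≤ M) {φ : GridCell 2 → R} {κ : R}
    (hφ : ∀ c ∈ sphereCells M 2, c.dim = 1 →
      φ c = if c = ![(-M, false), (-1, true)] then κ else 0) :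
    pairing φ (boundary (cube M 2)) = -κ := by
  have hboundary : boundary (cube M 1) =
      Finsupp.single ![(M, false)] 1 - Finsupp.single ![(-M, false)] 1 := by
    rw [cube, boundary_sum_cons_true _ (by lia)]
    simp [cube, cellBoundary]
  have hcons : ∀ {N : ℕ} (x : ℤ × Bool) (c : GridCell N), GridCell.cons x c = Matrix.vecCons x c :=
    fun _ _ => rfl
  have hvert : ∀ v, v = M ∨ v = -M → ∀ w ∈ Finset.Ico (-M) M,
      φ ![(v, false), (w, true)] = if v = -M ∧ w = -1 then κ else 0 := by
    intro v hv w hw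
    simp only [Finset.mem_Ico] at hw
    rw [hφ]
    · simp
    · refine ⟨Fin.forall_fin_two.2 ?_, 0, rfl, hv⟩
      simp [base, top]
      lia
    · simp [dim, Fin.univ_succ, Finset.filter_insert, Finset.filter_singleton]
  have hhor : ∀ v, v = M ∨ v = -M → ∀ w ∈ Finset.Ico (-M) M,
      φ ![(w, true), (v, false)] = 0 := by
    intro v hv w hw
    simp only [Finset.mem_Ico] at hw
    rw [hφ]
    · simp
    · refine ⟨Fin.forall_fin_two.2 ?_, 1, rfl, hv⟩
      simp [base, top]
      lia
    · simp [dim, Fin.univ_succ, Finset.filter_insert, Finset.filter_singleton]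
  rw [cube, boundary_sum_cons_true _ (by lia), hboundary, cube, cube]
  simp only [map_sub, map_sum, cons_single, pairing_single, Finset.sum_sub_distrib, hcons]
  rw [Finset.sum_congr rfl (hvert M (.inl rfl)), Finset.sum_congr rfl (hvert (-M) (.inr rfl)),
    Finset.sum_congr rfl (hhor M (.inl rfl)), Finset.sum_congr rfl (hhor (-M) (.inr rfl))]
  have hM' : M ≠ -M := by lia
  have hmem : -1 ∈ Finset.Ico (-M) M := by simp; lia
  simp [hM', Finset.sum_ite_eq', hmem]

theorem base_atOnes (s : ℕ) (c : GridCell 2) :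
    (c.atOnes s).base = Fin.append (fun _ : Fin s => 1) c.base := by
  refine funext (Fin.addCases (fun i => ?_) fun j => ?_) <;> simp [GridCell.atOnes, base]

theorem top_atOnes (s : ℕ) (c : GridCell 2) :
    (c.atOnes s).top = Fin.append (fun _ : Fin s => 1) c.top := by
  refine funext (Fin.addCases (fun i => ?_) fun j => ?_) <;> simp [GridCell.atOnes, top]

theorem dim_atOnes (s : ℕ) (c : GridCell 2) : (c.atOnes s).dim = c.dim := by
  simp only [dim, Fin.sum_univ_add, GridCell.atOnes, Fin.append_left, Fin.append_right]
  simp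

/-- The iterated slice of the cube along the frontiers of the regions `p i` is a relative cycle, on
which `μ` is a coboundary, with boundary the plane square at height `(1, …, 1)`. -/
theorem period_eq_zero {s : ℕ} {M : ℤ} (hM : 1 ≤ M) {p : Fin s → (Fin (s + 2) → ℤ) → Prop}
    {μ : (Fin (s + 2) → ℤ) → (Fin (s + 2) → ℤ) → R} {κ : R}
    (hp : ∀ c ∈ sphereCells M (s + 2), ∀ i, p i c.base ↔ 0 < c.base (Fin.castAdd 2 i))
    (hμ : ∀ d ∈ cubeCells M (s + 2),
      (∀ i, ∃ c ∈ cubeCells M (s + 2), d.IsFace c ∧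
        ∃ e : GridCell (s + 2), e.IsFace c ∧ ¬(p i e.base ↔ p i c.base)) →
      ∃ ψ : (Fin (s + 2) → ℤ) → R,
        ∀ e : GridCell (s + 2), e.IsFace d → μ e.base e.top = ψ e.top - ψ e.base)
    (hκ : ∀ c ∈ sphereCells M 2, c.dim = 1 →
      μ (Fin.append (fun _ => 1) c.base) (Fin.append (fun _ => 1) c.top) =
        if c = ![(-M, false), (-1, true)] then κ else 0) :
    κ = 0 := by
  have hpairing : pairing (edgeCochain μ) (boundary (iterSlice p (cube M (s + 2)))) = 0 :=
    eq_of_mem_supportedOn (f := pairing (edgeCochain μ) ∘ₗ boundary) (g := 0)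
      (fun d hd => by simpa using pairing_cellBoundary_eq_zero (hμ d hd.1 hd.2))
      (iterSlice_mem_supportedOn p (faceClosed_cubeCells M _) (cube_mem_supportedOn M _))
  have hslice : boundary (iterSlice p (cube M (s + 2))) =
      (-1 : ℤ) ^ s • atOnes s (boundary (cube M 2)) := by
    rw [boundary_iterSlice, iterSlice_congr (q := fun i l => 0 < l (Fin.castAdd 2 i))
      (faceClosed_sphereCells M _)
      (fun i c hc => hp c hc i) (boundary_cube_mem_supportedOn (by lia) _), ← boundary_iterSlice,
      iterSlice_cube hM, map_smul, boundary_atOnes]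
  rw [hslice, map_smul, pairing_atOnes, pairing_boundary_cube_two hM (κ := κ)] at hpairing
  · rcases Nat.even_or_odd s with hs | hs <;> simpa [hs.neg_one_pow] using hpairing
  · intro c hc hdim
    rw [edgeCochain, dim_atOnes, if_pos hdim, base_atOnes, top_atOnes, hκ c hc hdim]

end Cochains

end GridChain

section Uniformity

open Metric

theorem exists_pos_forall_ball_of_norm_le {X F : Type*} [PseudoMetricSpace X]
    [NormedAddCommGroup F] {K : Set X} (hK : IsCompact K) {u : X → F} (hu : Continuous u)
    {good : Set X → Prop} (hmono : ∀ ⦃S T⦄, S ⊆ T → good T → good S)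
    (h : ∀ x ∈ K, u x = 0 → ∃ S ∈ 𝓝 x, good S) :
    ∃ ε > 0, ∀ x ∈ K, ‖u x‖ ≤ ε → good (ball x ε) := by
  have hlocal : ∀ x ∈ K, ∀ᶠ q : ℝ × X in 𝓝 (0, x), ‖u q.2‖ ≤ q.1 → good (ball q.2 q.1) := by
    intro x hx
    by_cases hux : u x = 0
    · obtain ⟨S, hS, hgood⟩ := h x hx hux
      obtain ⟨r, hr, hrS⟩ := Metric.mem_nhds_iff.1 hS
      filter_upwards [prod_mem_nhds (Iio_mem_nhds (half_pos hr)) (ball_mem_nhds x (half_pos hr))]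
        with ⟨ε, y⟩ ⟨hε, hy⟩ _
      refine hmono ((ball_subset_ball' ?_).trans hrS) hgood
      linarith [Set.mem_Iio.1 hε, mem_ball.1 hy]
    · have hpos : ∀ᶠ q : ℝ × X in 𝓝 (0, x), q.1 < ‖u q.2‖ :=
        continuousAt_fst.eventually_lt (hu.comp continuous_snd).norm.continuousAt
          (norm_pos_iff.2 hux)
      filter_upwards [hpos] with q hq hle using absurd hle hq.not_ge
  have hev : ∀ᶠ ε : ℝ in 𝓝 0, ∀ x ∈ K, ‖u x‖ ≤ ε → good (ball x ε) :=
    hK.eventually_forall_of_forall_eventually hlocal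
  have hpos : ∀ᶠ ε : ℝ in 𝓝[>] 0, 0 < ε := self_mem_nhdsWithin
  exact (hpos.and (hev.filter_mono nhdsWithin_le_nhds)).exists

end Uniformity

section Branch

/-- The number of sheets of the logarithm crossed by a short step from `a` to `b`: the principal
argument drops by `2π` when the negative real axis is crossed downwards. -/
noncomputable def argJump (a b : ℂ) : ℤ :=
  if a.re < 0 ∧ b.re < 0 then (if b.im < 0 then 1 else 0) - (if a.im < 0 then 1 else 0) else 0

theorem exists_mem_nhds_argJump_eq_zero {z : ℂ} (hz : z ∈ slitPlane) :
    ∃ S ∈ 𝓝 z, ∀ a ∈ S, ∀ b ∈ S, argJump a b = 0 := by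
  rcases mem_slitPlane_iff.1 hz with hre | him
  · refine ⟨_, continuous_re.continuousAt.eventually (lt_mem_nhds hre), fun a ha b _ => ?_⟩
    exact if_neg fun h => ha.not_gt h.1
  · rcases him.lt_or_gt with him | him
    · refine ⟨_, continuous_im.continuousAt.eventually (gt_mem_nhds him), fun a ha b hb => ?_⟩
      simp only [argJump, show a.im < 0 from ha, show b.im < 0 from hb, if_true, sub_self,
        ite_self]
    · refine ⟨_, continuous_im.continuousAt.eventually (lt_mem_nhds him), fun a ha b hb => ?_⟩
      simp only [argJump, show ¬a.im < 0 from ha.not_gt, show ¬b.im < 0 from hb.not_gt, if_false,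
        sub_self, ite_self]

theorem exists_continuousAt_arg_branch {z : ℂ} (hz : z ≠ 0) :
    ∃ (A : ℂ → ℝ) (k : ℂ → ℤ), ContinuousAt A z ∧ (∀ᶠ a in 𝓝 z, A a = arg a + 2 * Real.pi * k a) ∧
      ∀ᶠ p in 𝓝 (z, z), argJump p.1 p.2 = k p.2 - k p.1 := by
  by_cases hs : z ∈ slitPlane
  · refine ⟨arg, 0, continuousAt_arg hs, by simp, ?_⟩
    obtain ⟨S, hS, h⟩ := exists_mem_nhds_argJump_eq_zero hs
    filter_upwards [prod_mem_nhds hS hS] with p hp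
    simpa using h _ hp.1 _ hp.2
  · have hre : z.re < 0 := by
      rw [mem_slitPlane_iff] at hs
      push Not at hs
      exact hs.1.lt_of_ne fun h => hz (Complex.ext h hs.2)
    have hneg : -z ∈ slitPlane := mem_slitPlane_iff.2 (Or.inl (by simpa using hre))
    have hev : ∀ᶠ a : ℂ in 𝓝 z, a.re < 0 := continuous_re.continuousAt.eventually (gt_mem_nhds hre)
    refine ⟨fun a => arg (-a) + Real.pi, fun a => if a.im < 0 then 1 else 0,
      ((continuousAt_arg hneg).comp (f := fun a : ℂ => -a) continuousAt_neg).add continuousAt_const,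
      ?_, ?_⟩
    · filter_upwards [hev] with a ha
      rcases lt_trichotomy a.im 0 with him | him | him
      · rw [if_pos him, arg_neg_eq_arg_add_pi_of_im_neg him]; push_cast; ring
      · have ha' : a = (a.re : ℂ) := Complex.ext rfl him
        rw [if_neg him.not_lt, ha', arg_ofReal_of_neg ha, ← ofReal_neg,
          arg_ofReal_of_nonneg (by linarith)]
        simp
      · rw [if_neg him.not_gt, arg_neg_eq_arg_sub_pi_of_im_pos him]; simp
    · filter_upwards [prod_mem_nhds hev hev] with p hp using if_pos hp

end Branch

section Slicing

open Metric GridCell GridChain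

/-- The point of the lattice `(1 / M) ℤᴺ` with index `l`. -/
noncomputable def latticePoint {N : ℕ} (M : ℤ) (l : Fin N → ℤ) : Fin N → ℝ := fun i => l i / M

theorem dist_latticePoint_le {N : ℕ} {M : ℤ} (hM : 0 < M) {l l' : Fin N → ℤ}
    (h : ∀ i, |l i - l' i| ≤ 1) : dist (latticePoint M l) (latticePoint M l') ≤ 1 / M := by
  have hM' : (0 : ℝ) < M := by exact_mod_cast hM
  refine (dist_pi_le_iff (by positivity)).2 fun i => ?_
  rw [Real.dist_eq, latticePoint, latticePoint, ← sub_div, abs_div, abs_of_pos hM']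
  gcongr
  exact_mod_cast h i

theorem GridCell.IsFace.dist_base_le {N : ℕ} {M : ℤ} (hM : 0 < M) {d c : GridCell N}
    (h : d.IsFace c) : dist (latticePoint M d.base) (latticePoint M c.base) ≤ 1 / M := by
  refine dist_latticePoint_le hM fun i => ?_
  have := h i
  simp only [base]
  grind

theorem GridCell.IsFace.dist_top_le {N : ℕ} {M : ℤ} (hM : 0 < M) {d c : GridCell N}
    (h : d.IsFace c) : dist (latticePoint M d.top) (latticePoint M c.base) ≤ 1 / M := by
  refine dist_latticePoint_le hM fun i => ?_
  have := h i
  simp only [base, top]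
  grind

theorem norm_latticePoint_le {N : ℕ} {M : ℤ} (hM : 0 < M) {l : Fin N → ℤ}
    (h : ∀ i, |l i| ≤ M) : ‖latticePoint M l‖ ≤ 1 := by
  have hM' : (0 : ℝ) < M := by exact_mod_cast hM
  refine (pi_norm_le_iff_of_nonneg zero_le_one).2 fun i => ?_
  rw [Real.norm_eq_abs, latticePoint, abs_div, abs_of_pos hM', div_le_one hM']
  exact_mod_cast h i

theorem norm_latticePoint_eq_one {N : ℕ} {M : ℤ} (hM : 0 < M) {l : Fin N → ℤ}
    (h : ∀ i, |l i| ≤ M) {i : Fin N} (hi : l i = M ∨ l i = -M) : ‖latticePoint M l‖ = 1 := by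
  have hM' : (0 : ℝ) < M := by exact_mod_cast hM
  refine (norm_latticePoint_le hM h).antisymm (le_of_eq_of_le ?_ (norm_le_pi_norm _ i))
  have hi' : |l i| = M := by rcases hi with hi | hi <;> simp only [hi, abs_neg, abs_of_pos hM]
  rw [Real.norm_eq_abs, latticePoint, abs_div, ← Int.cast_abs, hi', abs_of_pos hM',
    div_self hM'.ne']

theorem GridChain.abs_base_le {N : ℕ} {M : ℤ} {c : GridCell N} (hc : c ∈ cubeCells M N)
    (i : Fin N) : |c.base i| ≤ M := by
  have := hc i
  simp only [base, top] at this ⊢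
  grind

theorem GridChain.abs_top_le {N : ℕ} {M : ℤ} {c : GridCell N} (hc : c ∈ cubeCells M N)
    (i : Fin N) : |c.top i| ≤ M := by
  have := hc i
  simp only [base, top] at this ⊢
  grind

/-- The last two coordinates of a vector, as a complex number. -/
def planePart {s : ℕ} (x : Fin (s + 2) → ℝ) : ℂ := ⟨x (Fin.natAdd s 0), x (Fin.natAdd s 1)⟩

@[fun_prop]
theorem continuous_planePart {s : ℕ} : Continuous (planePart : (Fin (s + 2) → ℝ) → ℂ) :=
  Complex.equivRealProdCLM.symm.continuous.comp
    (f := fun x : Fin (s + 2) → ℝ => (x (Fin.natAdd s 0), x (Fin.natAdd s 1))) (by fun_prop)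

theorem argJump_latticePoint {s : ℕ} {M : ℤ} (hM : 1 ≤ M) {c : GridCell 2}
    (hc : c ∈ sphereCells M 2) (hdim : c.dim = 1) :
    argJump (planePart (latticePoint M (Fin.append (fun _ : Fin s => 1) c.base)))
      (planePart (latticePoint M (Fin.append (fun _ : Fin s => 1) c.top))) =
    if c = ![(-M, false), (-1, true)] then -1 else 0 := by
  have hM' : (0 : ℝ) < M := by exact_mod_cast hM
  have hneg (l : Fin 2 → ℤ) (i : Fin 2) :
      latticePoint M (Fin.append (fun _ : Fin s => 1) l) (Fin.natAdd s i) < 0 ↔ l i < 0 := by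
    rw [latticePoint, Fin.append_right, div_lt_iff₀ hM', zero_mul, Int.cast_lt_zero]
  obtain ⟨hcube, i, hi⟩ := hc
  have h₀ := hcube 0
  have h₁ := hcube 1
  have hext : c = ![(-M, false), (-1, true)] ↔ c 0 = (-M, false) ∧ c 1 = (-1, true) := by
    rw [funext_iff, Fin.forall_fin_two]; rfl
  simp only [argJump, planePart, hneg, hext]
  simp only [dim, Fin.sum_univ_two] at hdim
  simp only [base, top] at h₀ h₁ ⊢
  fin_cases i <;> simp only [Fin.zero_eta, Fin.mk_one] at hi <;> grind

theorem exists_mem_nhds_forall_of_eventually {X : Type*} [TopologicalSpace X] {x : X}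
    {r : X × X → Prop} (h : ∀ᶠ p in 𝓝 (x, x), r p) : ∃ S ∈ 𝓝 x, ∀ a ∈ S, ∀ b ∈ S, r (a, b) := by
  obtain ⟨S, hS, T, hT, hST⟩ := mem_nhds_prod_iff.1 h
  exact ⟨S ∩ T, Filter.inter_mem hS hT, fun a ha b hb => hST ⟨ha.1, hb.2⟩⟩

theorem norm_latticePoint_append_one {s : ℕ} {M : ℤ} (hM : 1 ≤ M) {l : Fin 2 → ℤ}
    (h : ∀ i, |l i| ≤ M) {i : Fin 2} (hi : l i = M ∨ l i = -M) :
    ‖latticePoint M (Fin.append (fun _ : Fin s => 1) l)‖ = 1 :=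
  norm_latticePoint_eq_one (i := Fin.natAdd s i) (by lia)
    (Fin.addCases (fun j => by rwa [Fin.append_left, abs_one])
      (fun j => by rw [Fin.append_right]; exact h j))
    (by rwa [Fin.append_right])

theorem dist_latticePoint_append_one_le {s : ℕ} {M : ℤ} (hM : 1 ≤ M) (c : GridCell 2) :
    dist (latticePoint M (Fin.append (fun _ : Fin s => 1) c.top))
      (latticePoint M (Fin.append (fun _ : Fin s => 1) c.base)) ≤ 1 / M := by
  simpa only [top_atOnes, base_atOnes] using (IsFace.refl (c.atOnes s)).dist_top_le (by lia)

theorem exists_lattice_scale {X F : Type*} [PseudoMetricSpace X] [PseudoMetricSpace F] {K : Set X}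
    (hK : IsCompact K) {u : X → F} (hu : Continuous u) {ε : ℝ} (hε : 0 < ε) :
    ∃ M : ℤ, 1 ≤ M ∧ (1 / M : ℝ) < ε ∧
      ∀ x ∈ K, ∀ y ∈ K, dist x y ≤ 1 / M + 1 / M → dist (u x) (u y) < ε := by
  obtain ⟨δ, hδ, huδ⟩ := Metric.uniformContinuousOn_iff.1
    (hK.uniformContinuousOn_of_continuous hu.continuousOn) ε hε
  obtain ⟨k, hk⟩ := exists_nat_one_div_lt (half_pos (lt_min hε hδ))
  have hk' : 1 / ((k + 1 : ℤ) : ℝ) < min ε δ / 2 := by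
    simpa only [Int.cast_add, Int.cast_natCast, Int.cast_one] using hk
  have : 0 < min ε δ := lt_min hε hδ
  refine ⟨k + 1, by lia, ?_, fun x hx y hy hxy => huδ x hx y hy ?_⟩
  · linarith [min_le_left ε δ]
  · linarith [min_le_right ε δ]

theorem norm_le_of_forall_sign_change {N s : ℕ} {M : ℤ} (hM : 0 < M)
    {u : (Fin N → ℝ) → (Fin s → ℝ)} {ε : ℝ} (hε : 0 < ε)
    (hu : ∀ x ∈ closedBall 0 1, ∀ y ∈ closedBall 0 1,
      dist x y ≤ 1 / M + 1 / M → dist (u x) (u y) < ε)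
    {d : GridCell N} (hd : d ∈ cubeCells M N)
    (hsign : ∀ i, ∃ c ∈ cubeCells M N, d.IsFace c ∧ ∃ e : GridCell N, e.IsFace c ∧
      ¬(0 < u (latticePoint M e.base) i ↔ 0 < u (latticePoint M c.base) i)) :
    ‖u (latticePoint M d.base)‖ ≤ ε := by
  have hball {c : GridCell N} (hc : c ∈ cubeCells M N) : latticePoint M c.base ∈ closedBall 0 1 :=
    mem_closedBall_zero_iff.2 (norm_latticePoint_le hM (abs_base_le hc))
  refine (pi_norm_le_iff_of_nonneg hε.le).2 fun i => ?_
  obtain ⟨c, hc, hdc, e, hec, hne⟩ := hsign i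
  have hdc' := (dist_le_pi_dist _ _ i).trans_lt <| hu _ (hball hd) _ (hball hc) <|
    (hdc.dist_base_le hM).trans (le_add_of_nonneg_right (by positivity))
  have hde := (dist_le_pi_dist _ _ i).trans_lt <|
    hu _ (hball hd) _ (hball (faceClosed_cubeCells M _ hc hec)) <|
      (dist_triangle_right _ _ _).trans (add_le_add (hdc.dist_base_le hM) (hec.dist_base_le hM))
  rw [Real.dist_eq, abs_lt] at hdc' hde
  rw [Real.norm_eq_abs, abs_le]
  have h := not_iff.1 hne
  by_cases he : 0 < u (latticePoint M e.base) i
  · have hc₀ : ¬0 < u (latticePoint M c.base) i := fun hc₀ => h.2 hc₀ he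
    constructor <;> linarith
  · have hc₀ : 0 < u (latticePoint M c.base) i := h.1 he
    constructor <;> linarith

theorem holonomy_eq_zero_of_uniform {R : Type*} [AddCommGroup R] {s : ℕ}
    {u : (Fin (s + 2) → ℝ) → (Fin s → ℝ)} (hu : Continuous u)
    (hu_sphere : ∀ x, ‖x‖ = 1 → ∀ i, u x i = x (Fin.castAdd 2 i))
    {μ : (Fin (s + 2) → ℝ) → (Fin (s + 2) → ℝ) → R} {κ : R} {ε : ℝ} (hε : 0 < ε)
    (hμ : ∀ x ∈ closedBall 0 1, ‖u x‖ ≤ ε → ∃ ψ : (Fin (s + 2) → ℝ) → R,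
      ∀ a ∈ ball x ε, ∀ b ∈ ball x ε, μ a b = ψ b - ψ a)
    (hμ_sphere : ∀ x, ‖x‖ = 1 → ‖u x‖ ≤ ε → ∀ y ∈ ball x ε, ‖y‖ = 1 →
      μ x y = argJump (planePart x) (planePart y) • κ) : κ = 0 := by
  obtain ⟨M, hM, hMε, huM⟩ := exists_lattice_scale
    (isCompact_closedBall (0 : Fin (s + 2) → ℝ) 1) hu hε
  have hM₀ : 0 < M := by lia
  have hM' : (0 : ℝ) < M := by exact_mod_cast hM₀
  suffices h : -κ = 0 from neg_eq_zero.1 h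
  refine period_eq_zero hM (p := fun i l => 0 < u (latticePoint M l) i)
    (μ := fun a b => μ (latticePoint M a) (latticePoint M b)) ?_ ?_ ?_
  · rintro c ⟨hc, i, -, hi⟩ j
    rw [hu_sphere _ (norm_latticePoint_eq_one hM₀ (abs_base_le hc) hi), latticePoint,
      div_pos_iff_of_pos_right hM', Int.cast_pos]
  · intro d hd hsign
    obtain ⟨ψ, hψ⟩ := hμ (latticePoint M d.base)
      (mem_closedBall_zero_iff.2 (norm_latticePoint_le hM₀ (abs_base_le hd)))
      (norm_le_of_forall_sign_change hM₀ hε huM hd hsign)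
    exact ⟨fun l => ψ (latticePoint M l), fun e he => hψ _
      (mem_ball.2 ((he.dist_base_le hM₀).trans_lt hMε)) _
      (mem_ball.2 ((he.dist_top_le hM₀).trans_lt hMε))⟩
  · intro c hc hdim
    have hbase : ‖latticePoint M (Fin.append (fun _ : Fin s => 1) c.base)‖ = 1 := by
      obtain ⟨hc, i, -, hi⟩ := hc
      exact norm_latticePoint_append_one hM (abs_base_le hc) hi
    have htop : ‖latticePoint M (Fin.append (fun _ : Fin s => 1) c.top)‖ = 1 := by
      obtain ⟨hc, i, hi₂, hi⟩ := hc
      refine norm_latticePoint_append_one hM (abs_top_le hc) (i := i) ?_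
      simpa only [top, hi₂, Bool.false_eq_true, if_false] using hi
    have hubase : ‖u (latticePoint M (Fin.append (fun _ : Fin s => 1) c.base))‖ ≤ ε := by
      refine (pi_norm_le_iff_of_nonneg hε.le).2 fun i => ?_
      rw [hu_sphere _ hbase, latticePoint, Fin.append_left, Int.cast_one, Real.norm_eq_abs,
        abs_of_pos (one_div_pos.2 hM')]
      exact hMε.le
    rw [hμ_sphere _ hbase hubase _ (mem_ball.2 ((dist_latticePoint_append_one_le hM c).trans_lt
      hMε)) htop, argJump_latticePoint hM hc hdim, ite_smul, neg_one_smul, zero_smul]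

/-- The zeros of `u` bound the circle `‖x‖ = 1` in the plane of the last two coordinates, along
which `μ` has holonomy `κ`. -/
theorem holonomy_eq_zero {R : Type*} [AddCommGroup R] {s : ℕ}
    {u : (Fin (s + 2) → ℝ) → (Fin s → ℝ)} (hu : Continuous u)
    (hu_sphere : ∀ x, ‖x‖ = 1 → ∀ i, u x i = x (Fin.castAdd 2 i))
    {μ : (Fin (s + 2) → ℝ) → (Fin (s + 2) → ℝ) → R} {κ : R}
    (hμ : ∀ x, ‖x‖ ≤ 1 → u x = 0 → ∃ ψ : (Fin (s + 2) → ℝ) → R,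
      ∀ᶠ p in 𝓝 (x, x), μ p.1 p.2 = ψ p.2 - ψ p.1)
    (hμ_sphere : ∀ x, ‖x‖ = 1 → u x = 0 → ∀ᶠ p in 𝓝 (x, x), ‖p.1‖ = 1 → ‖p.2‖ = 1 →
      μ p.1 p.2 = argJump (planePart p.1) (planePart p.2) • κ) : κ = 0 := by
  obtain ⟨ε₁, hε₁, hcob⟩ := exists_pos_forall_ball_of_norm_le (isCompact_closedBall 0 1) hu
    (good := fun S => ∃ ψ : (Fin (s + 2) → ℝ) → R, ∀ a ∈ S, ∀ b ∈ S, μ a b = ψ b - ψ a)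
    (fun S T hST ⟨ψ, hψ⟩ => ⟨ψ, fun a ha b hb => hψ a (hST ha) b (hST hb)⟩)
    (fun x hx hux => by
      obtain ⟨ψ, hψ⟩ := hμ x (mem_closedBall_zero_iff.1 hx) hux
      obtain ⟨S, hS, h⟩ := exists_mem_nhds_forall_of_eventually hψ
      exact ⟨S, hS, ψ, h⟩)
  obtain ⟨ε₂, hε₂, hjump⟩ := exists_pos_forall_ball_of_norm_le (isCompact_sphere 0 1) hu
    (good := fun S => ∀ a ∈ S, ∀ b ∈ S, ‖a‖ = 1 → ‖b‖ = 1 →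
      μ a b = argJump (planePart a) (planePart b) • κ)
    (fun S T hST h a ha b hb => h a (hST ha) b (hST hb))
    (fun x hx hux => exists_mem_nhds_forall_of_eventually
      (hμ_sphere x (mem_sphere_zero_iff_norm.1 hx) hux))
  refine holonomy_eq_zero_of_uniform (μ := μ) hu hu_sphere (lt_min hε₁ hε₂) (fun x hx hux => ?_)
    (fun x hx hux y hy hy₁ => ?_)
  · obtain ⟨ψ, hψ⟩ := hcob x hx (hux.trans (min_le_left _ _))
    have hsub : ball x (min ε₁ ε₂) ⊆ ball x ε₁ := ball_subset_ball (min_le_left _ _)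
    exact ⟨ψ, fun a ha b hb => hψ a (hsub ha) b (hsub hb)⟩
  · exact hjump x (mem_sphere_zero_iff_norm.2 hx) (hux.trans (min_le_right _ _)) x
      (mem_ball_self hε₂) y (ball_subset_ball (min_le_right _ _) hy) hx hy₁

end Slicing

section RootsOfUnity

variable {X Y E : Type*} [TopologicalSpace X] [TopologicalSpace Y] [NormedAddCommGroup E]
  [NormedSpace ℂ E] {g : ℕ}

/-- Continuity at `x` up to multiplication by `g`-th roots of unity. Away from its zeros, `σ` then
represents a map to the quotient of `E` by these roots which is continuous at `x`. -/
def ContinuousAtUpToRoots (g : ℕ) (σ : X → E) (x : X) : Prop :=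
  ∃ τ : X → rootsOfUnity g ℂ, ContinuousAt (fun a => τ a • σ a) x

theorem ContinuousAtUpToRoots.comp {σ : X → E} {f : Y → X} {y : Y}
    (hσ : ContinuousAtUpToRoots g σ (f y)) (hf : ContinuousAt f y) :
    ContinuousAtUpToRoots g (σ ∘ f) y := by
  obtain ⟨τ, hτ⟩ := hσ
  exact ⟨τ ∘ f, hτ.comp hf⟩

theorem ContinuousAtUpToRoots.roots_smul {σ : X → E} {x : X} (hσ : ContinuousAtUpToRoots g σ x)
    (ρ : X → rootsOfUnity g ℂ) : ContinuousAtUpToRoots g (fun a => ρ a • σ a) x := by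
  obtain ⟨τ, hτ⟩ := hσ
  exact ⟨fun a => τ a * (ρ a)⁻¹, by simpa only [smul_smul, inv_mul_cancel_right] using hτ⟩

theorem roots_smul_ne_self {z : rootsOfUnity g ℂ} (hz : z ≠ 1) {v : E} (hv : v ≠ 0) :
    z • v ≠ v := by
  intro h
  have h₁ : (((z : ℂˣ) : ℂ) - 1) • v = 0 := by
    rw [sub_smul, one_smul]
    exact sub_eq_zero.2 h
  rcases smul_eq_zero.1 h₁ with h₁ | h₁
  · exact hz (Subtype.ext (Units.ext (sub_eq_zero.1 h₁)))
  · exact hv h₁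

variable [NeZero g]

theorem norm_roots_smul (z : rootsOfUnity g ℂ) (v : E) : ‖z • v‖ = ‖v‖ := by
  rw [show z • v = ((z : ℂˣ) : ℂ) • v from rfl, norm_smul,
    Complex.norm_eq_one_of_mem_rootsOfUnity z.2, one_mul]

/-- A `g`-th root of unity carrying `v` closest to `w`. -/
noncomputable def nearestRoot (g : ℕ) [NeZero g] (v w : E) : rootsOfUnity g ℂ :=
  (Finite.exists_min fun z : rootsOfUnity g ℂ => ‖w - z • v‖).choose

theorem norm_sub_nearestRoot_smul_le (v w : E) (z : rootsOfUnity g ℂ) :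
    ‖w - nearestRoot g v w • v‖ ≤ ‖w - z • v‖ :=
  (Finite.exists_min fun z : rootsOfUnity g ℂ => ‖w - z • v‖).choose_spec z

theorem eventually_eq_one_of_norm_sub_smul_le {v : E} (hv : v ≠ 0) :
    ∀ᶠ p in 𝓝 (v, v), ∀ z : rootsOfUnity g ℂ, ‖p.2 - z • p.1‖ ≤ ‖p.2 - p.1‖ → z = 1 := by
  refine Filter.eventually_all.2 fun z => ?_
  by_cases hz : z = 1
  · exact Filter.Eventually.of_forall fun _ _ => hz
  · have hlt : ‖(v, v).2 - (v, v).1‖ < ‖(v, v).2 - z • (v, v).1‖ := by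
      rw [sub_self, norm_zero, norm_sub_pos_iff]
      exact (roots_smul_ne_self hz hv).symm
    have hcont : ContinuousAt (fun p : E × E => ‖p.2 - z • p.1‖) (v, v) :=
      (continuous_snd.sub (continuous_fst.const_smul ((z : ℂˣ) : ℂ))).norm.continuousAt
    filter_upwards [(continuous_snd.sub continuous_fst).norm.continuousAt.eventually_lt hcont hlt]
      with p hp hle using absurd hle hp.not_ge

theorem eventually_nearestRoot_eq {v : E} (hv : v ≠ 0) :
    ∀ᶠ p in 𝓝 (v, v), ∀ (z w : rootsOfUnity g ℂ) (v₁ v₂ : E), z • v₁ = p.1 → w • v₂ = p.2 →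
      nearestRoot g v₁ v₂ = z * w⁻¹ := by
  filter_upwards [eventually_eq_one_of_norm_sub_smul_le (g := g) hv]
  rintro ⟨_, _⟩ hp z w v₁ v₂ rfl rfl
  have hmin := norm_sub_nearestRoot_smul_le v₁ v₂ (z * w⁻¹)
  rw [← norm_roots_smul w, ← norm_roots_smul w (_ - (z * w⁻¹) • _)] at hmin
  have h := hp (w * nearestRoot g v₁ v₂ * z⁻¹) (by
    simpa only [smul_sub, smul_smul, inv_mul_cancel_right, mul_inv_cancel_comm_assoc] using hmin)
  rw [mul_inv_eq_one] at h
  rw [← h, mul_inv_cancel_comm]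

theorem planePart_ne_zero {s : ℕ} {x : Fin (s + 2) → ℝ} (hx : x ≠ 0)
    (h : ∀ i : Fin s, x (Fin.castAdd 2 i) = 0) : planePart x ≠ 0 := by
  refine fun h₀ => hx (funext (Fin.addCases h fun j => ?_))
  fin_cases j
  exacts [congrArg re h₀, congrArg im h₀]

/-- The generator `exp (2πi / g)` of the `g`-th roots of unity, raised to the power `m`. -/
noncomputable def rootExp (g : ℕ) [NeZero g] (m : ℕ) : rootsOfUnity g ℂ :=
  rootsOfUnity.mkOfPowEq (exp (2 * Real.pi * I * m / g)) <| by
    rw [← Complex.exp_nat_mul, Complex.exp_eq_one_iff]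
    exact ⟨m, by field_simp [NeZero.ne g]; push_cast; ring⟩

theorem coe_rootExp (m : ℕ) : ((rootExp g m : ℂˣ) : ℂ) = exp (2 * Real.pi * I * m / g) :=
  rootsOfUnity.coe_mkOfPowEq _

theorem dvd_of_rootExp_eq_one {m : ℕ} (h : rootExp g m = 1) : g ∣ m := by
  have h₁ : exp (2 * Real.pi * I * m / g) = 1 := by rw [← coe_rootExp, h]; rfl
  obtain ⟨k, hk⟩ := Complex.exp_eq_one_iff.1 h₁
  have hg : (g : ℂ) ≠ 0 := NeZero.ne _
  have := Complex.two_pi_I_ne_zero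
  have hmk : (m : ℂ) = g * k := by
    field_simp at hk
    linear_combination hk
  exact Int.natCast_dvd_natCast.1 ⟨k, by exact_mod_cast hmk⟩

theorem rootExp_zpow_smul (m : ℕ) (k : ℤ) (θ : ℝ) (v : E) :
    rootExp g m ^ k • exp (I * θ * m / g) • v =
      exp (I * (θ + 2 * Real.pi * k : ℝ) * m / g) • v := by
  change (((rootExp g m ^ k : rootsOfUnity g ℂ) : ℂˣ) : ℂ) • (_ : E) = _
  rw [smul_smul, Subgroup.coe_zpow, Units.val_zpow_eq_zpow_val, coe_rootExp, ← Complex.exp_int_mul,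
    ← Complex.exp_add]
  congr 2
  push_cast; ring

theorem eventually_nearestRoot_eq_zpow_argJump {X : Type*} [TopologicalSpace X] {S : Set X} {x : X}
    {m : ℕ} {c : X → ℂ} (hc : ContinuousAt c x) (hcx : c x ≠ 0) {σ e : X → E}
    (he : ContinuousAt e x) (hσ : ∀ a ∈ S, σ a = exp (I * arg (c a) * m / g) • e a) (hx : x ∈ S)
    (hσx : σ x ≠ 0) :
    ∀ᶠ p in 𝓝 (x, x), p.1 ∈ S → p.2 ∈ S →
      nearestRoot g (σ p.1) (σ p.2) = (rootExp g m)⁻¹ ^ argJump (c p.1) (c p.2) := by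
  obtain ⟨A, k, hA, hAk, hjump⟩ := exists_continuousAt_arg_branch hcx
  set φ : X → E := fun a => exp (I * A (c a) * m / g) • e a
  have hφ : ContinuousAt φ x := by
    have : ContinuousAt (fun a => A (c a)) x := hA.comp hc
    fun_prop
  have hφσ {a : X} (ha : a ∈ S) (hAa : A (c a) = arg (c a) + 2 * Real.pi * k (c a)) :
      rootExp g m ^ k (c a) • σ a = φ a := by
    rw [hσ a ha, rootExp_zpow_smul, ← hAa]
  have hAk' := hc.eventually hAk
  have hne : φ x ≠ 0 := by
    rw [← hφσ hx hAk'.self_of_nhds]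
    exact (smul_ne_zero_iff_ne _).2 hσx
  filter_upwards [(hφ.prodMap' hφ).eventually (eventually_nearestRoot_eq (g := g) hne),
    (hc.prodMap' hc).eventually hjump, prod_mem_nhds hAk' hAk'] with p hp hjump hAp h₁ h₂
  simp only [Prod.map_fst, Prod.map_snd] at hjump
  rw [hp _ _ _ _ (hφσ h₁ hAp.1) (hφσ h₂ hAp.2), ← zpow_neg, ← zpow_add, inv_zpow', hjump]
  congr 1
  lia

theorem dvd_of_continuousAtUpToRoots {s m : ℕ} {u : (Fin (s + 2) → ℝ) → (Fin s → ℝ)}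
    (hu : Continuous u) (hu_sphere : ∀ x, ‖x‖ = 1 → ∀ i, u x i = x (Fin.castAdd 2 i))
    {σ e : (Fin (s + 2) → ℝ) → E} (he : Continuous e)
    (hσ : ∀ x, ‖x‖ ≤ 1 → u x = 0 → σ x ≠ 0 ∧ ContinuousAtUpToRoots g σ x)
    (hσ_sphere : ∀ x, ‖x‖ = 1 → σ x = exp (I * arg (planePart x) * m / g) • e x) : g ∣ m := by
  have hκ := holonomy_eq_zero (R := Additive (rootsOfUnity g ℂ)) hu hu_sphere
    (μ := fun a b => .ofMul (nearestRoot g (σ a) (σ b))) (κ := .ofMul (rootExp g m)⁻¹) ?_ ?_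
  · exact dvd_of_rootExp_eq_one (inv_eq_one.1 hκ)
  · intro x hx hux
    obtain ⟨hσx, τ, hτ⟩ := hσ x hx hux
    have hne : τ x • σ x ≠ 0 := (smul_ne_zero_iff_ne (τ x)).2 hσx
    refine ⟨fun a => .ofMul (τ a)⁻¹, ?_⟩
    filter_upwards [(hτ.prodMap' hτ).eventually (eventually_nearestRoot_eq (g := g) hne)] with p hp
    rw [hp _ _ _ _ rfl rfl, ofMul_mul, ofMul_inv, ofMul_inv]
    abel
  · intro x hx hux
    have hx₀ : planePart x ≠ 0 := planePart_ne_zero (norm_ne_zero_iff.1 (hx.trans_ne one_ne_zero))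
      fun i => by rw [← hu_sphere x hx, hux, Pi.zero_apply]
    filter_upwards [eventually_nearestRoot_eq_zpow_argJump (S := {a | ‖a‖ = 1})
      continuous_planePart.continuousAt hx₀ he.continuousAt hσ_sphere hx (hσ x hx.le hux).1]
      with p hp h₁ h₂
    rw [hp h₁ h₂, ofMul_zpow]

end RootsOfUnity

section GeneralPosition

open Metric

variable {D B : Type*} [NormedAddCommGroup D] [NormedSpace ℝ D] [NormedAddCommGroup B]
  [NormedSpace ℝ B]

theorem exists_continuous_near_avoiding [FiniteDimensional ℝ D] [FiniteDimensional ℝ B]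
    (hdim : Module.finrank ℝ D < Module.finrank ℝ B) {F : D → B} (hF : Continuous F) (p : B)
    {δ : ℝ} (hδ : 0 < δ) :
    ∃ G : D → B, Continuous G ∧ (∀ x, G x ≠ p) ∧ ∀ x, ‖G x - F x‖ < δ := by
  obtain ⟨G, hG, hGF, -⟩ := hF.exists_contDiff_approx (1 : ℕ∞) (ε := fun _ => δ / 2)
    continuous_const (fun _ => half_pos hδ)
  have hdense : Dense (Set.range G)ᶜ :=
    ContDiff.dense_compl_range_of_finrank_lt_finrank hG hdim
  obtain ⟨q, hqp, hq⟩ := Metric.dense_iff.1 hdense p (δ / 2) (half_pos hδ)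
  rw [mem_ball, dist_eq_norm] at hqp
  refine ⟨fun x => G x + (p - q), hG.continuous.add continuous_const, fun x hx => hq ⟨x, ?_⟩,
    fun x => ?_⟩
  · rwa [← eq_sub_iff_add_eq, sub_sub_cancel] at hx
  · calc ‖G x + (p - q) - F x‖ = ‖(G x - F x) - (q - p)‖ := by congr 1; abel
      _ ≤ ‖G x - F x‖ + ‖q - p‖ := norm_sub_le _ _
      _ < δ := by linarith [dist_eq_norm (G x) (F x) ▸ hGF x]

theorem exists_continuous_avoiding_of_near {X : Type*} [TopologicalSpace X] {F G : X → B}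
    (hF : Continuous F) (hG : Continuous G) {p : B} (hGp : ∀ x, G x ≠ p) {δ : ℝ} (hδ : 0 < δ)
    (hGF : ∀ x, ‖G x - F x‖ < δ) :
    ∃ F' : X → B, Continuous F' ∧ (∀ x, 2 * δ ≤ ‖F x - p‖ → F' x = F x) ∧ (∀ x, F' x ≠ p) ∧
      ∀ x, ‖F' x - F x‖ < δ := by
  let χ : X → ℝ := fun x => max 0 (min 1 (2 - ‖F x - p‖ / δ))
  have hχ₀ x : 0 ≤ χ x := le_max_left _ _
  have hχ₁ x : χ x ≤ 1 := max_le zero_le_one (min_le_left _ _)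
  have hnear x : ‖χ x • (G x - F x)‖ < δ := by
    rw [norm_smul, Real.norm_of_nonneg (hχ₀ x)]
    exact (mul_le_of_le_one_left (norm_nonneg _) (hχ₁ x)).trans_lt (hGF x)
  refine ⟨fun x => F x + χ x • (G x - F x), by fun_prop, fun x hx => ?_, fun x hx => ?_,
    fun x => ?_⟩
  · have hle : 2 - ‖F x - p‖ / δ ≤ 0 := by rwa [sub_nonpos, le_div_iff₀ hδ]
    have hχ : χ x = 0 := max_eq_left ((min_le_right _ _).trans hle)
    simp only [hχ, zero_smul, add_zero]
  · by_cases hclose : ‖F x - p‖ ≤ δ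
    · have hle : 1 ≤ 2 - ‖F x - p‖ / δ := by linarith [(div_le_one hδ).2 hclose]
      have hχ : χ x = 1 := by simp only [χ, min_eq_left hle, max_eq_right zero_le_one]
      simp only [hχ, one_smul, add_sub_cancel] at hx
      exact hGp x hx
    · have hFp : F x - p = -(χ x • (G x - F x)) := by
        rw [← show F x + χ x • (G x - F x) = p from hx, sub_add_cancel_left]
      exact hclose (by rw [hFp, norm_neg]; exact (hnear x).le)
  · rw [add_sub_cancel_left]
    exact hnear x

theorem exists_continuous_avoiding_eqOn [FiniteDimensional ℝ D] [FiniteDimensional ℝ B]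
    (hdim : Module.finrank ℝ D < Module.finrank ℝ B) {F : D → B} (hF : Continuous F) {p : B}
    {K : Set D} (hK : IsCompact K) (hFp : ∀ x ∈ K, F x ≠ p) {ε : ℝ} (hε : 0 < ε) :
    ∃ F' : D → B, Continuous F' ∧ Set.EqOn F' F K ∧ (∀ x, F' x ≠ p) ∧
      ∀ x, ‖F' x - F x‖ < ε := by
  obtain ⟨η, hη, hηK⟩ : ∃ η > 0, ∀ x ∈ K, η ≤ ‖F x - p‖ :=
    hK.exists_forall_le' (hF.sub continuous_const).norm.continuousOn
      fun x hx => norm_sub_pos_iff.2 (hFp x hx)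
  have hδ : 0 < min ε (η / 2) := lt_min hε (half_pos hη)
  obtain ⟨G, hG, hGp, hGF⟩ := exists_continuous_near_avoiding hdim hF p hδ
  obtain ⟨F', hF', hfar, hF'p, hF'F⟩ := exists_continuous_avoiding_of_near hF hG hGp hδ hGF
  refine ⟨F', hF', fun x hx => hfar x ?_, hF'p, fun x => (hF'F x).trans_le (min_le_left _ _)⟩
  linarith [min_le_right ε (η / 2), hηK x hx]

/-- The radial retraction onto the closed unit ball. -/
noncomputable def unitBallRetraction (x : D) : D := (max 1 ‖x‖)⁻¹ • x

theorem continuous_unitBallRetraction : Continuous (unitBallRetraction : D → D) := by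
  refine Continuous.smul (Continuous.inv₀ (by fun_prop) fun x => ?_) continuous_id
  exact (zero_lt_one.trans_le (le_max_left 1 ‖x‖)).ne'

theorem unitBallRetraction_mem (x : D) : unitBallRetraction x ∈ closedBall 0 1 := by
  have hpos : 0 < max 1 ‖x‖ := zero_lt_one.trans_le (le_max_left _ _)
  rw [mem_closedBall_zero_iff, unitBallRetraction, norm_smul, norm_inv, Real.norm_of_nonneg hpos.le,
    inv_mul_le_one₀ hpos]
  exact le_max_right _ _

theorem unitBallRetraction_of_norm_le {x : D} (hx : ‖x‖ ≤ 1) : unitBallRetraction x = x := by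
  rw [unitBallRetraction, max_eq_left hx, inv_one, one_smul]

/-- General position makes `F` avoid the single point `p`, so that the zeros of `u` bound a surface
on which the covering given by `σ` has no branch point. -/
theorem dvd_of_finrank_lt [FiniteDimensional ℝ B] {E : Type*} [NormedAddCommGroup E]
    [NormedSpace ℂ E] {g : ℕ} [NeZero g] {s m : ℕ} (hdim : s + 2 < Module.finrank ℝ B)
    {W : Set B} (hW : IsOpen W) {p : B} {u : B → Fin s → ℝ} (hu : ContinuousOn u W) {σ : B → E}
    (hσ : ∀ y ∈ W, u y = 0 → y ≠ p → σ y ≠ 0 ∧ ContinuousAtUpToRoots g σ y)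
    {F : (Fin (s + 2) → ℝ) → B} (hF : ContinuousOn F (closedBall 0 1))
    (hFW : Set.MapsTo F (closedBall 0 1) W) (hFp : ∀ x, ‖x‖ = 1 → F x ≠ p)
    (hu_sphere : ∀ x, ‖x‖ = 1 → ∀ i, u (F x) i = x (Fin.castAdd 2 i))
    {e : (Fin (s + 2) → ℝ) → E} (he : Continuous e)
    (hσ_sphere : ∀ x, ‖x‖ = 1 → ∃ ζ : rootsOfUnity g ℂ,
      ζ • σ (F x) = exp (I * arg (planePart x) * m / g) • e x) : g ∣ m := by
  obtain ⟨ε, hε, hthick⟩ := ((isCompact_closedBall _ _).image_of_continuousOn hF)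
    |>.exists_thickening_subset_open hW hFW.image_subset
  have hret {x : Fin (s + 2) → ℝ} (hx : ‖x‖ = 1) : F (unitBallRetraction x) = F x := by
    rw [unitBallRetraction_of_norm_le hx.le]
  obtain ⟨F', hF', hF'F, hF'p, hF'near⟩ := exists_continuous_avoiding_eqOn (by simpa using hdim)
    (hF.comp_continuous continuous_unitBallRetraction unitBallRetraction_mem) (p := p)
    (isCompact_sphere 0 1)
    (fun x hx => (hret (mem_sphere_zero_iff_norm.1 hx)).trans_ne
      (hFp x (mem_sphere_zero_iff_norm.1 hx))) hε
  have hF'W x : F' x ∈ W := hthick <| mem_thickening_iff.2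
    ⟨_, Set.mem_image_of_mem F (unitBallRetraction_mem x), dist_eq_norm (F' x) _ ▸ hF'near x⟩
  have hF'_sphere {x : Fin (s + 2) → ℝ} (hx : ‖x‖ = 1) : F' x = F x :=
    (hF'F (mem_sphere_zero_iff_norm.2 hx)).trans (hret hx)
  have hρ x : ∃ ζ : rootsOfUnity g ℂ, ‖x‖ = 1 →
      ζ • σ (F x) = exp (I * arg (planePart x) * m / g) • e x := by
    by_cases hx : ‖x‖ = 1
    · exact (hσ_sphere x hx).imp fun _ h _ => h
    · exact ⟨1, fun h => absurd h hx⟩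
  choose ρ hρ using hρ
  refine dvd_of_continuousAtUpToRoots (u := u ∘ F') (σ := fun x => ρ x • σ (F' x))
    (hu.comp_continuous hF' hF'W) (fun x hx i => ?_) he (fun x _ hux => ?_) (fun x hx => ?_)
  · rw [Function.comp_apply, hF'_sphere hx, hu_sphere x hx]
  · obtain ⟨hne, hcont⟩ := hσ _ (hF'W x) hux (hF'p x)
    exact ⟨(smul_ne_zero_iff_ne _).2 hne, (hcont.comp hF'.continuousAt).roots_smul ρ⟩
  · simp only [hF'_sphere hx, hρ x hx]

end GeneralPosition

section InvarianceOfDimension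

open Metric

theorem continuousAtUpToRoots_exp_arg {X E : Type*} [TopologicalSpace X]
    [NormedAddCommGroup E] [NormedSpace ℂ E] {g : ℕ} [NeZero g] (m : ℕ) {c : X → ℂ} {e : X → E}
    {x : X} (hc : ContinuousAt c x) (hcx : c x ≠ 0) (he : ContinuousAt e x) :
    ContinuousAtUpToRoots g (fun a => exp (I * arg (c a) * m / g) • e a) x := by
  obtain ⟨A, k, hA, hAk, -⟩ := exists_continuousAt_arg_branch hcx
  have : ContinuousAt (fun a => A (c a)) x := hA.comp hc
  have hφ : ContinuousAt (fun a => exp (I * A (c a) * m / g) • e a) x := by fun_prop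
  refine ⟨fun a => rootExp g m ^ k (c a), hφ.congr ?_⟩
  filter_upwards [hc.eventually hAk] with a ha
  rw [rootExp_zpow_smul, ← ha]

theorem exists_pos_forall_add_smul_mem {A B : Type*} [SeminormedAddCommGroup A] [NormedSpace ℝ A]
    [SeminormedAddCommGroup B] [NormedSpace ℝ B] (L : A →L[ℝ] B) {v : B} {W : Set B} (hW : W ∈ 𝓝 v)
    (R : ℝ) : ∃ r : ℝ, 0 < r ∧ ∀ x, ‖x‖ ≤ R → v + r • L x ∈ W := by
  obtain ⟨ε, hε, hεW⟩ := Metric.mem_nhds_iff.1 hW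
  have hL : 0 < ‖L‖ * |R| + 1 := by positivity
  refine ⟨ε / (‖L‖ * |R| + 1), div_pos hε hL, fun x hx => hεW ?_⟩
  rw [mem_ball, dist_self_add_left, norm_smul, Real.norm_of_nonneg (div_pos hε hL).le,
    div_mul_eq_mul_div, div_lt_iff₀ hL]
  have := L.le_of_opNorm_le_of_le le_rfl (hx.trans (le_abs_self R))
  nlinarith

theorem exists_openPartialHomeomorph_closedBall_subset_target {Z B : Type*} [TopologicalSpace Z]
    [NormedAddCommGroup B] [NormedSpace ℝ B] [FiniteDimensional ℝ B]
    (e : OpenPartialHomeomorph Z B) {w : Z} (hw : w ∈ e.source) :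
    ∃ e' : OpenPartialHomeomorph Z (Fin (Module.finrank ℝ B) → ℝ),
      w ∈ e'.source ∧ e' w = 0 ∧ closedBall 0 1 ⊆ e'.target := by
  let L : (Fin (Module.finrank ℝ B) → ℝ) ≃L[ℝ] B := ContinuousLinearEquiv.ofFinrankEq (by simp)
  obtain ⟨r, hr, hrL⟩ := exists_pos_forall_add_smul_mem L.toContinuousLinearMap
    (e.open_target.mem_nhds (e.map_source hw)) 1
  let φ : (Fin (Module.finrank ℝ B) → ℝ) ≃ₜ B := L.toHomeomorph.trans
    ((Homeomorph.smulOfNeZero r hr.ne').trans (Homeomorph.addLeft (e w)))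
  refine ⟨e.transHomeomorph φ.symm, hw, φ.symm_apply_eq.2 ?_, fun z hz => ?_⟩
  · simp [φ]
  · simpa [φ] using hrL z (mem_closedBall_zero_iff.1 hz)

theorem finrank_le_of_openPartialHomeomorph {G B : Type*} [NormedAddCommGroup G] [NormedSpace ℝ G]
    [FiniteDimensional ℝ G] [NormedAddCommGroup B] [NormedSpace ℝ B] [FiniteDimensional ℝ B]
    (e : OpenPartialHomeomorph G B) (he : e.source.Nonempty) :
    Module.finrank ℝ G ≤ Module.finrank ℝ B := by
  by_contra! hlt
  obtain ⟨w, hw⟩ := he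
  obtain ⟨u, hwu, huw, hball⟩ := exists_openPartialHomeomorph_closedBall_subset_target e hw
  have htarget {x : Fin (Module.finrank ℝ B + 2) → ℝ} (hx : ‖x‖ ≤ 1) :
      (fun i => x (Fin.castAdd 2 i)) ∈ u.target :=
    hball <| mem_closedBall_zero_iff.2 <|
      (pi_norm_le_iff_of_nonneg zero_le_one).2 fun i => (norm_le_pi_norm x _).trans hx
  have h21 : 2 ∣ 1 := dvd_of_finrank_lt (g := 2) (m := 1) (W := u.source ×ˢ Set.univ) (p := (w, 0))
    (u := fun y => u y.1)
    (σ := fun y : G × ℂ => exp (I * arg y.2 * (1 : ℕ) / (2 : ℕ)) • (‖y.2‖ : ℂ))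
    (F := fun x => (u.symm fun i => x (Fin.castAdd 2 i), planePart x))
    (e := fun x => (‖planePart x‖ : ℂ)) (by simpa using hlt) (u.open_source.prod isOpen_univ)
    (u.continuousOn.comp continuousOn_fst fun y hy => hy.1) ?_ ?_
    (fun x hx => ⟨u.map_target (htarget (mem_closedBall_zero_iff.1 hx)), trivial⟩) ?_
    (fun x hx i => congrFun (u.right_inv (htarget hx.le)) i) (by fun_prop)
    (fun x _ => ⟨1, one_smul _ _⟩)
  · exact absurd h21 (by norm_num)
  · rintro ⟨v, c⟩ ⟨hv, -⟩ huv hvp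
    have hvw : v = w := u.injOn hv hwu (huv.trans huw.symm)
    have hc : c ≠ 0 := by rintro rfl; exact hvp (by rw [hvw])
    have hnorm : ContinuousAt (fun y : G × ℂ => (‖y.2‖ : ℂ)) (v, c) := by fun_prop
    exact ⟨by simp [hc], continuousAtUpToRoots_exp_arg 1 continuousAt_snd hc hnorm⟩
  · refine ContinuousOn.prodMk (u.continuousOn_symm.comp (by fun_prop) fun x hx => ?_) (by fun_prop)
    exact htarget (mem_closedBall_zero_iff.1 hx)
  · intro x hx hFx
    have hx₀ : x ≠ 0 := norm_ne_zero_iff.1 (hx.trans_ne one_ne_zero)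
    have hux := (u.right_inv (htarget hx.le)).symm.trans
      ((congrArg u (congrArg Prod.fst hFx)).trans huw)
    exact planePart_ne_zero hx₀ (congrFun hux) (congrArg Prod.snd hFx)

end InvarianceOfDimension

section BranchedQuotient

open Metric

variable {X Y Z A B E : Type*} [TopologicalSpace X] [TopologicalSpace Y] [TopologicalSpace Z]
  [TopologicalSpace A] [NormedAddCommGroup E] [NormedSpace ℂ E] {g : ℕ}

theorem ContinuousAtUpToRoots.continuousAt_comp {σ : X → E} {x : X}
    (hσ : ContinuousAtUpToRoots g σ x) {P : X × E → Y}
    (hP : ∀ a v, ∀ ζ : rootsOfUnity g ℂ, P (a, ζ • v) = P (a, v))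
    (hPx : ∀ ζ : rootsOfUnity g ℂ, ContinuousAt P (x, ζ • σ x)) :
    ContinuousAt (fun a => P (a, σ a)) x := by
  obtain ⟨τ, hτ⟩ := hσ
  simpa only [Function.comp_def, hP] using ContinuousAt.comp
    (f := fun a => (a, τ a • σ a)) (hPx (τ x)) (continuousAt_id.prodMk hτ)

/-- `u` and, up to `g`-th roots of unity, `σ` descend from `N` to the open set `π '' N`, on which
`π` induces the quotient topology. -/
structure BranchedCoordinates (g : ℕ) (π : X → Y) (N : Set X) (u : X → A) (σ : X → E) : Prop where
  isOpen : IsOpen N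
  map_nhds : ∀ a ∈ N, Filter.map π (𝓝 a) = 𝓝 (π a)
  continuousOn_fst : ContinuousOn u N
  continuousOn_snd : ContinuousOn σ N
  fst_eq : ∀ a ∈ N, ∀ b ∈ N, π a = π b → u a = u b
  exists_smul_snd_eq : ∀ a ∈ N, ∀ b ∈ N, π a = π b → ∃ ζ : rootsOfUnity g ℂ, ζ • σ a = σ b

namespace BranchedCoordinates

variable {π : X → Y} {N : Set X} {u : X → A} {σ : X → E} (h : BranchedCoordinates g π N u σ)
include h

theorem isOpen_image : IsOpen (π '' N) := isOpen_iff_mem_nhds.2 <| by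
  rintro _ ⟨a, ha, rfl⟩
  exact h.map_nhds a ha ▸ Filter.image_mem_map (h.isOpen.mem_nhds ha)

theorem exists_lift [Nonempty X] [TopologicalSpace B] (Φ : OpenPartialHomeomorph Y B)
    (hNΦ : Set.MapsTo π N Φ.source) :
    ∃ (W : Set B) (l : B → X), IsOpen W ∧ W ⊆ Φ.target ∧
      (∀ y ∈ W, l y ∈ N ∧ π (l y) = Φ.symm y) ∧ ∀ a ∈ N, Φ (π a) ∈ W :=
  ⟨Φ.target ∩ Φ.symm ⁻¹' (π '' N), fun y => Function.invFunOn π N (Φ.symm y),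
    Φ.symm.isOpen_inter_preimage h.isOpen_image, Set.inter_subset_left,
    fun _ hy => ⟨Function.invFunOn_mem hy.2, Function.invFunOn_eq hy.2⟩,
    fun a ha => ⟨Φ.map_source (hNΦ ha), a, ha, (Φ.left_inv (hNΦ ha)).symm⟩⟩

variable {ψ : Z → Y} {l : Z → X} {z : Z} (hψ : ContinuousAt ψ z)
  (hl : ∀ᶠ y in 𝓝 z, l y ∈ N ∧ π (l y) = ψ y)
include hψ hl

theorem eventually_exists_near_lift {S : Set X} (hS : S ∈ 𝓝 (l z)) :
    ∀ᶠ y in 𝓝 z, ∃ a ∈ S ∩ N, π a = ψ y := by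
  obtain ⟨hlN, hlz⟩ := hl.self_of_nhds
  refine hψ.eventually (p := fun y => ∃ a ∈ S ∩ N, π a = y) ?_
  rw [← hlz, ← h.map_nhds _ hlN]
  exact Filter.image_mem_map (Filter.inter_mem hS (h.isOpen.mem_nhds hlN))

theorem continuousAt_fst_comp_lift : ContinuousAt (u ∘ l) z := by
  intro O hO
  have huO := h.continuousOn_fst.continuousAt (h.isOpen.mem_nhds hl.self_of_nhds.1) hO
  rw [Filter.mem_map]
  filter_upwards [hl, h.eventually_exists_near_lift hψ hl huO]
  rintro y ⟨hlN, hly⟩ ⟨a, ⟨haO, haN⟩, ha⟩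
  rw [Set.mem_preimage, Function.comp_apply, h.fst_eq _ hlN a haN (hly.trans ha.symm)]
  exact haO

theorem continuousAtUpToRoots_snd_comp_lift [NeZero g] : ContinuousAtUpToRoots g (σ ∘ l) z := by
  have hσ := h.continuousOn_snd.continuousAt (h.isOpen.mem_nhds hl.self_of_nhds.1)
  have hnear {ε : ℝ} (hε : 0 < ε) :
      ∀ᶠ y in 𝓝 z, dist (nearestRoot g (σ (l y)) (σ (l z)) • σ (l y)) (σ (l z)) < ε := by
    filter_upwards [hl, h.eventually_exists_near_lift hψ hl (hσ (ball_mem_nhds _ hε))]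
    rintro y ⟨hlN, hly⟩ ⟨a, ⟨haε, haN⟩, ha⟩
    obtain ⟨ζ, hζ⟩ := h.exists_smul_snd_eq _ hlN a haN (hly.trans ha.symm)
    rw [dist_comm, dist_eq_norm]
    refine (norm_sub_nearestRoot_smul_le _ _ ζ).trans_lt ?_
    rwa [hζ, ← dist_eq_norm, dist_comm]
  have hz : nearestRoot g (σ (l z)) (σ (l z)) • σ (l z) = σ (l z) :=
    eq_of_forall_dist_le fun ε hε => (hnear hε).self_of_nhds.le
  refine ⟨fun y => nearestRoot g (σ (l y)) (σ (l z)), ?_⟩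
  rw [ContinuousAt, Metric.tendsto_nhds]
  simpa only [Function.comp_apply, hz] using fun ε hε => hnear hε

end BranchedCoordinates

/-- The principal branch of the `g`-th root, up to a positive factor: it divides the argument by `g`
and preserves the absolute value. -/
noncomputable def divArg (g : ℕ) (c : ℂ) : ℂ := exp (I * arg c / g) * ‖c‖

theorem norm_divArg (g : ℕ) (c : ℂ) : ‖divArg g c‖ = ‖c‖ := by
  have h : I * arg c / g = (arg c / g : ℝ) * I := by push_cast; ring
  rw [divArg, h, norm_mul, Complex.norm_exp_ofReal_mul_I, one_mul, norm_real, norm_norm]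

theorem divArg_pow (g m : ℕ) (c : ℂ) : divArg g c ^ m = exp (I * arg c * m / g) * ‖c‖ ^ m := by
  rw [divArg, mul_pow, ← Complex.exp_nat_mul]
  ring_nf

theorem continuousAtUpToRoots_divArg [NeZero g] (c : ℂ) : ContinuousAtUpToRoots g (divArg g) c := by
  rcases eq_or_ne c 0 with rfl | hc
  · have h₀ : divArg g 0 = 0 := by rw [divArg, norm_zero, ofReal_zero, mul_zero]
    refine ⟨1, ?_⟩
    simp only [Pi.one_apply, one_smul]
    rw [ContinuousAt, h₀]
    exact tendsto_zero_iff_norm_tendsto_zero.2 (by simpa only [norm_divArg] using tendsto_norm_zero)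
  · have hnorm : ContinuousAt (fun a : ℂ => (‖a‖ : ℂ)) c := by fun_prop
    unfold divArg
    simpa only [Nat.cast_one, mul_one, id_eq, smul_eq_mul] using
      continuousAtUpToRoots_exp_arg (g := g) 1 continuousAt_id hc hnorm

theorem norm_planePart_le {s : ℕ} (x : Fin (s + 2) → ℝ) : ‖planePart x‖ ≤ 2 * ‖x‖ := by
  have h := Complex.norm_le_abs_re_add_abs_im (planePart x)
  have h₀ := norm_le_pi_norm x (Fin.natAdd s 0)
  have h₁ := norm_le_pi_norm x (Fin.natAdd s 1)
  simp only [planePart, Real.norm_eq_abs] at h h₀ h₁ ⊢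
  linarith

/-- The cube `[-1, 1] ^ (s + 2)` mapped by `G`, through a `g`-th root of its last two
coordinates. -/
noncomputable def branchedCube (g : ℕ) {s : ℕ} (G : (Fin s → ℝ) → ℂ → X)
    (x : Fin (s + 2) → ℝ) : X :=
  G (fun i => x (Fin.castAdd 2 i)) (divArg g (planePart x))

section BranchedCube

variable {s : ℕ} {G : (Fin s → ℝ) → ℂ → X} {N : Set X}
  (hGN : ∀ z w, ‖z‖ ≤ 1 → ‖w‖ ≤ 2 → G z w ∈ N) {x : Fin (s + 2) → ℝ} (hx : ‖x‖ ≤ 1)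
include hGN hx

omit [TopologicalSpace X] in
theorem mem_of_norm_eq_norm_planePart {w : ℂ} (hw : ‖w‖ = ‖planePart x‖) :
    G (fun i => x (Fin.castAdd 2 i)) w ∈ N := by
  refine hGN _ _ ((pi_norm_le_iff_of_nonneg zero_le_one).2 fun i => ?_) ?_
  · exact (norm_le_pi_norm x _).trans hx
  · linarith [norm_planePart_le x]

omit [TopologicalSpace X] in
theorem branchedCube_mem (g : ℕ) : branchedCube g G x ∈ N :=
  mem_of_norm_eq_norm_planePart hGN hx (norm_divArg g _)

theorem continuousAt_branchedCube [NeZero g] {π : X → Y} (hG : Continuous ↿G)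
    (hπ : ∀ a ∈ N, ContinuousAt π a)
    (hπG : ∀ z w, ∀ ζ : rootsOfUnity g ℂ, π (G z (ζ • w)) = π (G z w)) :
    ContinuousAt (fun x => π (branchedCube g G x)) x := by
  refine ((continuousAtUpToRoots_divArg _).comp continuous_planePart.continuousAt).continuousAt_comp
    (P := fun p => π (G (fun i => p.1 (Fin.castAdd 2 i)) p.2)) (fun a v ζ => hπG _ _ ζ) fun ζ => ?_
  refine ContinuousAt.comp
    (f := fun p : (Fin (s + 2) → ℝ) × ℂ => G (fun i => p.1 (Fin.castAdd 2 i)) p.2)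
    (hπ _ (mem_of_norm_eq_norm_planePart hGN hx ?_)) ?_
  · rw [norm_roots_smul, Function.comp_apply, norm_divArg]
  · exact (hG.comp (f := fun p : (Fin (s + 2) → ℝ) × ℂ => ((fun i => p.1 (Fin.castAdd 2 i)), p.2))
      (by fun_prop)).continuousAt

end BranchedCube

theorem BranchedCoordinates.map_branchedCube_ne {π : X → Y} {N : Set X} {s m : ℕ}
    {u : X → Fin s → ℝ} {σ : X → E} (h : BranchedCoordinates g π N u σ) {G : (Fin s → ℝ) → ℂ → X}
    (hGN : ∀ z w, ‖z‖ ≤ 1 → ‖w‖ ≤ 2 → G z w ∈ N) (huG : ∀ z w, u (G z w) = z) {e : E} (he : e ≠ 0)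
    (hσG : ∀ z w, σ (G z w) = w ^ m • e) (hm : m ≠ 0) {x : Fin (s + 2) → ℝ} (hx : ‖x‖ = 1) :
    π (branchedCube g G x) ≠ π (G 0 0) := by
  intro hπx
  have hxN : branchedCube g G x ∈ N := branchedCube_mem hGN hx.le g
  have h₀ : G 0 0 ∈ N := hGN 0 0 (by simp) (by simp)
  have hux := h.fst_eq _ hxN _ h₀ hπx
  obtain ⟨ζ, hζ⟩ := h.exists_smul_snd_eq _ hxN _ h₀ hπx
  rw [branchedCube, huG, huG] at hux
  rw [branchedCube, hσG, hσG, zero_pow hm, zero_smul, smul_eq_zero_iff_eq] at hζ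
  refine planePart_ne_zero (norm_ne_zero_iff.1 (hx.trans_ne one_ne_zero)) (congrFun hux) ?_
  have := (smul_eq_zero.1 hζ).resolve_right he
  rwa [pow_eq_zero_iff hm, ← norm_eq_zero, norm_divArg, norm_eq_zero] at this

theorem BranchedCoordinates.dvd [NeZero g] [NormedAddCommGroup B] [NormedSpace ℝ B]
    [FiniteDimensional ℝ B] {π : X → Y} {N : Set X} {s m : ℕ} {u : X → Fin s → ℝ} {σ : X → E}
    (h : BranchedCoordinates g π N u σ) (hdim : s + 2 < Module.finrank ℝ B)
    (Φ : OpenPartialHomeomorph Y B) (hNΦ : Set.MapsTo π N Φ.source)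
    {G : (Fin s → ℝ) → ℂ → X} (hG : Continuous ↿G) (hGN : ∀ z w, ‖z‖ ≤ 1 → ‖w‖ ≤ 2 → G z w ∈ N)
    (hπG : ∀ z w, ∀ ζ : rootsOfUnity g ℂ, π (G z (ζ • w)) = π (G z w))
    (huG : ∀ z w, u (G z w) = z) {e : E} (he : e ≠ 0) (hσG : ∀ z w, σ (G z w) = w ^ m • e)
    (huσ : ∀ a ∈ N, u a = 0 → σ a = 0 → π a = π (G 0 0)) : g ∣ m := by
  rcases eq_or_ne m 0 with rfl | hm
  · exact dvd_zero g
  have h₀ : G 0 0 ∈ N := hGN 0 0 (by simp) (by simp)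
  have : Nonempty X := ⟨G 0 0⟩
  have hT {x : Fin (s + 2) → ℝ} (hx : ‖x‖ ≤ 1) := branchedCube_mem hGN hx g
  obtain ⟨W, l, hW, hWΦ, hl, hΦW⟩ := h.exists_lift Φ hNΦ
  have hlΦ {a : X} (ha : a ∈ N) : l (Φ (π a)) ∈ N ∧ π (l (Φ (π a))) = π a := by
    simpa only [Φ.left_inv (hNΦ ha)] using hl _ (hΦW a ha)
  have hlW {y : B} (hy : y ∈ W) := Filter.mem_of_superset (hW.mem_nhds hy) hl
  have hΦ {y : B} (hy : y ∈ W) := Φ.symm.continuousAt (hWΦ hy)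
  refine dvd_of_finrank_lt hdim hW (u := u ∘ l) (σ := σ ∘ l) (p := Φ (π (G 0 0)))
    (F := fun x => Φ (π (branchedCube g G x))) (e := fun x => (‖planePart x‖ ^ m : ℂ) • e)
    (fun y hy => (h.continuousAt_fst_comp_lift (hΦ hy) (hlW hy)).continuousWithinAt)
    (fun y hy huy hyp =>
      ⟨fun hσy => hyp ?_, h.continuousAtUpToRoots_snd_comp_lift (hΦ hy) (hlW hy)⟩)
    (fun x hx => ?_) (fun x hx => hΦW _ (hT (mem_closedBall_zero_iff.1 hx))) (fun x hx hFx => ?_)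
    (fun x hx i => ?_) (by fun_prop) (fun x hx => ?_)
  · rw [← huσ _ (hl y hy).1 huy hσy, (hl y hy).2, Φ.right_inv (hWΦ hy)]
  · have hx := mem_closedBall_zero_iff.1 hx
    have hF := continuousAt_branchedCube hGN hx hG (fun a ha => (h.map_nhds a ha).le) hπG
    exact (ContinuousAt.comp (f := fun x => π (branchedCube g G x)) (Φ.continuousAt (hNΦ (hT hx)))
      hF).continuousWithinAt
  · exact h.map_branchedCube_ne hGN huG he hσG hm hx (Φ.injOn (hNΦ (hT hx.le)) (hNΦ h₀) hFx)
  · rw [Function.comp_apply, h.fst_eq _ (hlΦ (hT hx.le)).1 _ (hT hx.le) (hlΦ (hT hx.le)).2,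
      branchedCube, huG]
  · obtain ⟨ζ, hζ⟩ := h.exists_smul_snd_eq _ (hlΦ (hT hx.le)).1 _ (hT hx.le) (hlΦ (hT hx.le)).2
    refine ⟨ζ, hζ.trans ?_⟩
    rw [branchedCube, hσG, divArg_pow, mul_smul]

end BranchedQuotient

section OrbitSpace

variable {n : ℕ}

/-- The quotient map from ordered configurations to configurations modulo affine maps. -/
def configClass (f : OrdConfig n Set.univ) : ConfigModAff n := Quot.mk _ (Quot.mk _ f)

/-- The configuration relabelled by `τ` and transformed by `z ↦ b z + a`. -/
def OrdConfig.affine (τ : Equiv.Perm (Fin n)) (a : ℂ) (b : ℂˣ) (f : OrdConfig n Set.univ) :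
    OrdConfig n Set.univ :=
  ⟨fun i => b * f.1 (τ i) + a,
    fun _ _ h => τ.injective (f.2.1 (b.isUnit.mul_left_cancel (add_right_cancel h))),
    fun _ => trivial⟩

/-- Two ordered configurations are equivalent if an affine map sends one to a relabelling of the
other. -/
def affineSetoid (n : ℕ) : Setoid (OrdConfig n Set.univ) where
  r f h := ∃ τ a b, h = f.affine τ a b
  iseqv := by
    refine ⟨fun f => ⟨1, 0, 1, ?_⟩, ?_, ?_⟩
    · ext i; simp [OrdConfig.affine]
    · rintro f _ ⟨τ, a, b, rfl⟩
      refine ⟨τ⁻¹, -(b⁻¹ : ℂˣ) * a, b⁻¹, ?_⟩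
      ext i; simp [OrdConfig.affine, mul_add]
    · rintro f _ _ ⟨τ, a, b, rfl⟩ ⟨τ', a', b', rfl⟩
      refine ⟨τ * τ', b' * a + a', b' * b, ?_⟩
      ext i; simp [OrdConfig.affine]; ring

theorem configClass_eq_iff {f h : OrdConfig n Set.univ} :
    configClass f = configClass h ↔ ∃ τ a b, h = f.affine τ a b := by
  constructor
  · let lift : ConfigModAff n → Quotient (affineSetoid n) :=
      Quot.lift (Quot.lift (Quotient.mk _) fun f h ⟨τ, hτ⟩ =>
        Quotient.sound ⟨τ, 0, 1, by ext i; simp [OrdConfig.affine, hτ]⟩) (by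
          rintro _ _ ⟨a, b, hb, f, h, rfl, rfl, hfh⟩
          exact Quotient.sound ⟨1, a, Units.mk0 b hb, by ext i; simp [OrdConfig.affine, hfh]⟩)
    exact fun heq => Quotient.exact (congrArg lift heq)
  · rintro ⟨τ, a, b, rfl⟩
    have hperm : permRel n Set.univ f (f.affine τ 0 1) := ⟨τ, by ext i; simp [OrdConfig.affine]⟩
    refine (congrArg (Quot.mk _) (Quot.sound hperm)).trans ?_
    exact Quot.sound ⟨a, b, b.ne_zero, _, _, rfl, rfl, fun i => by simp [OrdConfig.affine]⟩

theorem continuous_affine (τ : Equiv.Perm (Fin n)) (a : ℂ) (b : ℂˣ) :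
    Continuous (OrdConfig.affine τ a b) :=
  Continuous.subtype_mk (continuous_pi fun i => (continuous_const.mul
    ((continuous_apply (τ i)).comp continuous_subtype_val)).add continuous_const) _

theorem isQuotientMap_configClass : IsQuotientMap (configClass (n := n)) :=
  isQuotientMap_quot_mk.comp isQuotientMap_quot_mk

theorem isOpenMap_configClass : IsOpenMap (configClass (n := n)) := by
  intro O hO
  have hsat : configClass ⁻¹' (configClass '' O) = ⋃ τ, ⋃ a, ⋃ b, OrdConfig.affine τ a b ⁻¹' O := by
    ext f
    simp only [Set.mem_preimage, Set.mem_image, Set.mem_iUnion]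
    constructor
    · rintro ⟨h, hO, hh⟩
      obtain ⟨τ, a, b, rfl⟩ := configClass_eq_iff.1 hh.symm
      exact ⟨τ, a, b, hO⟩
    · rintro ⟨τ, a, b, hO⟩
      exact ⟨_, hO, (configClass_eq_iff.2 ⟨τ, a, b, rfl⟩).symm⟩
  rw [← isQuotientMap_configClass.isOpen_preimage, hsat]
  exact isOpen_iUnion fun τ => isOpen_iUnion fun a => isOpen_iUnion fun b =>
    hO.preimage (continuous_affine τ a b)

theorem map_configClass_nhds (f : OrdConfig n Set.univ) :
    Filter.map configClass (𝓝 f) = 𝓝 (configClass f) :=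
  isOpenMap_configClass.map_nhds_eq isQuotientMap_configClass.continuous.continuousAt

end OrbitSpace

section RootPoly

open Polynomial

variable {K : Type*} [Field K] {n : ℕ}

/-- The monic polynomial whose roots are the entries of `f`. -/
noncomputable def rootPoly (f : Fin n → K) : K[X] := ∏ i, (X - C (f i))

theorem monic_rootPoly (f : Fin n → K) : (rootPoly f).Monic := monic_prod_X_sub_C _ _

theorem natDegree_rootPoly (f : Fin n → K) : (rootPoly f).natDegree = n := by
  rw [rootPoly, natDegree_finsetProd_X_sub_C_eq_card, Finset.card_univ, Fintype.card_fin]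

theorem isRoot_rootPoly {f : Fin n → K} {z : K} : (rootPoly f).IsRoot z ↔ ∃ i, f i = z := by
  simp only [rootPoly, IsRoot.def, eval_prod, eval_sub, eval_X, eval_C, Finset.prod_eq_zero_iff,
    sub_eq_zero, Finset.mem_univ, true_and]
  exact exists_congr fun _ => eq_comm

theorem rootPoly_comp_perm (f : Fin n → K) (τ : Equiv.Perm (Fin n)) :
    rootPoly (f ∘ τ) = rootPoly f := Equiv.prod_comp τ fun i => X - C (f i)

theorem exists_perm_of_rootPoly_eq {f h : Fin n → K} (hh : Function.Injective h)
    (heq : rootPoly f = rootPoly h) : ∃ τ : Equiv.Perm (Fin n), h = f ∘ τ := by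
  have hroot i : ∃ j, f j = h i := by rw [← isRoot_rootPoly, heq, isRoot_rootPoly]; exact ⟨i, rfl⟩
  choose τ hτ using hroot
  have hinj : Function.Injective τ := fun i j hij => hh (by rw [← hτ i, ← hτ j, hij])
  exact ⟨Equiv.ofBijective τ (Finite.injective_iff_bijective.1 hinj), funext fun i => (hτ i).symm⟩

theorem rootPoly_eq_of_isRoot {f : Fin n → K} (hf : Function.Injective f) {P : K[X]}
    (hP : P.Monic) (hn : P.natDegree = n) (hroot : ∀ i, P.IsRoot (f i)) : rootPoly f = P :=
  (eq_of_monic_of_dvd_of_natDegree_le (monic_rootPoly f) hP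
    (Finset.prod_dvd_of_coprime ((pairwise_coprime_X_sub_C hf).set_pairwise _)
      fun i _ => dvd_iff_isRoot.2 (hroot i)) (hn.trans (natDegree_rootPoly f).symm).le).symm

theorem rootPoly_smul_comp (β : K) (f : Fin n → K) :
    (rootPoly (β • f)).comp (C β * X) = C (β ^ n) * rootPoly f := by
  have (i : Fin n) : (X - C ((β • f) i)).comp (C β * X) = C β * (X - C (f i)) := by
    rw [sub_comp, X_comp, C_comp, Pi.smul_apply, smul_eq_mul, C_mul, mul_sub]
  simp only [rootPoly, prod_comp, this, Finset.prod_mul_distrib, Finset.prod_const,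
    Finset.card_univ, Fintype.card_fin, C_pow]

theorem coeff_zero_rootPoly_smul (β : K) (f : Fin n → K) :
    (rootPoly (β • f)).coeff 0 = β ^ n * (rootPoly f).coeff 0 := by
  have := congrArg (coeff · 0) (rootPoly_smul_comp β f)
  simpa only [comp_C_mul_X_coeff, coeff_C_mul, pow_zero, mul_one] using this

theorem nextCoeff_rootPoly (f : Fin n → K) : (rootPoly f).nextCoeff = -∑ i, f i :=
  prod_X_sub_C_nextCoeff f

theorem continuous_coeff_rootPoly [TopologicalSpace K] [IsTopologicalRing K] (j : ℕ) :
    Continuous fun f : Fin n → K => (rootPoly f).coeff j := by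
  suffices ∀ (s : Finset (Fin n)) (j : ℕ),
      Continuous fun f : Fin n → K => (∏ i ∈ s, (X - C (f i))).coeff j from this _ j
  intro s
  induction s using Finset.induction_on with
  | empty => exact fun j => by simpa only [Finset.prod_empty] using continuous_const
  | insert i s hi ih =>
    intro j
    have hlin (m) : Continuous fun f : Fin n → K => (X - C (f i)).coeff m := by
      rcases m with _ | m <;> simp only [coeff_sub, coeff_C_zero, coeff_C_succ] <;> fun_prop
    simp only [Finset.prod_insert hi, coeff_mul]
    exact continuous_finsetSum _ fun p _ => (hlin p.1).mul (ih p.2)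

end RootPoly

section ContinuityOfRoots

theorem eventually_injective {ι Z : Type*} [Finite ι] [TopologicalSpace Z] [T2Space Z] {f : ι → Z}
    (hf : Function.Injective f) : ∀ᶠ h in 𝓝 f, Function.Injective h := by
  have hne (i j : ι) (hij : i ≠ j) : ∀ᶠ h in 𝓝 f, h i ≠ h j :=
    (isOpen_ne_fun (continuous_apply i) (continuous_apply j)).mem_nhds (hf.ne hij)
  filter_upwards [Filter.eventually_all.2 fun i => Filter.eventually_all.2 fun j =>
    Filter.eventually_all.2 (hne i j)] with h hh i j hij
  exact of_not_not fun hne => hh i j hne hij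

open Polynomial

variable {T K : Type*} [TopologicalSpace T] [NormedField K] [IsAlgClosed K] {n : ℕ} {P : T → K[X]}
  {a₀ : T}

theorem eventually_exists_isRoot_norm_sub_lt
    (hP : ∀ a, (P a).Monic) (hn : ∀ a, (P a).natDegree = n)
    (hcont : ∀ j, ContinuousAt (fun a => (P a).coeff j) a₀) {z : K} (hz : (P a₀).IsRoot z) {ε : ℝ}
    (hε : 0 < ε) : ∀ᶠ a in 𝓝 a₀, ∃ w, (P a).IsRoot w ∧ ‖z - w‖ < ε := by
  have hn0 : n ≠ 0 := by
    rintro rfl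
    have h1 : P a₀ = 1 := (hP a₀).natDegree_eq_zero.1 (hn a₀)
    simp [h1] at hz
  obtain ⟨δ, hδε, hδ⟩ : ∃ δ : ℝ, ((n + 1) * δ) ^ (n : ℝ)⁻¹ * max ‖z‖ 1 < ε ∧ 0 < δ := by
    have hlim : ContinuousAt (fun δ : ℝ => ((n + 1) * δ) ^ (n : ℝ)⁻¹ * max ‖z‖ 1) 0 :=
      (ContinuousAt.rpow_const (by fun_prop) (Or.inr (by positivity))).mul_const _
    have hzero : ((n + 1) * (0 : ℝ)) ^ (n : ℝ)⁻¹ * max ‖z‖ 1 < ε := by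
      rwa [mul_zero, Real.zero_rpow (by positivity), zero_mul]
    exact ((hlim.eventually_lt_const hzero).filter_mono nhdsWithin_le_nhds |>.and
      self_mem_nhdsWithin).exists (f := 𝓝[>] (0 : ℝ))
  have hclose : ∀ᶠ a in 𝓝 a₀, ∀ j ≤ n, ‖(P a).coeff j - (P a₀).coeff j‖ < δ :=
    (Set.finite_Iic n).eventually_all.2 fun j _ => by
      simpa only [dist_eq_norm] using Metric.tendsto_nhds.1 (hcont j) δ hδ
  filter_upwards [hclose] with a ha
  have hcoeff (j) : ‖(P a).coeff j - (P a₀).coeff j‖ < δ := by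
    rcases le_or_gt j n with hj | hj
    · exact ha j hj
    · rwa [coeff_eq_zero_of_natDegree_lt (by rwa [hn]), coeff_eq_zero_of_natDegree_lt (by rwa [hn]),
        sub_self, norm_zero]
  obtain ⟨w, hw, hzw⟩ := exists_roots_norm_sub_lt_of_norm_coeff_sub_lt hδ hz (hP a₀) (hP a)
    ((hn a).trans (hn a₀).symm) hcoeff (IsAlgClosed.splits _)
  rw [hn] at hzw
  exact ⟨w, isRoot_of_mem_roots hw, hzw.trans hδε⟩

theorem eventually_exists_rootPoly_eq (hP : ∀ a, (P a).Monic)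
    (hn : ∀ a, (P a).natDegree = n) (hcont : ∀ j, ContinuousAt (fun a => (P a).coeff j) a₀)
    {f₀ : Fin n → K} (hf₀ : Function.Injective f₀) (heq : rootPoly f₀ = P a₀) {O : Set (Fin n → K)}
    (hO : O ∈ 𝓝 f₀) : ∀ᶠ a in 𝓝 a₀, ∃ f ∈ O, Function.Injective f ∧ rootPoly f = P a := by
  obtain ⟨ε, hε, hball⟩ := Metric.mem_nhds_iff.1 (Filter.inter_mem hO (eventually_injective hf₀))
  have hroots : ∀ᶠ a in 𝓝 a₀, ∀ i, ∃ w, (P a).IsRoot w ∧ ‖f₀ i - w‖ < ε :=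
    Filter.eventually_all.2 fun i => eventually_exists_isRoot_norm_sub_lt hP hn hcont
      (heq ▸ isRoot_rootPoly.2 ⟨i, rfl⟩) hε
  filter_upwards [hroots] with a ha
  choose f hroot hnear using ha
  obtain ⟨hfO, hf⟩ := hball (a := f) <| by
    rw [Metric.mem_ball, dist_comm, dist_pi_lt_iff hε]
    exact fun i => (dist_eq_norm _ _).trans_lt (hnear i)
  exact ⟨f, hfO, hf, rootPoly_eq_of_isRoot hf (hP a) (hn a) hroot⟩

end ContinuityOfRoots

section NormalForm

open Polynomial

variable {k : ℕ}

/-- The centred monic polynomial of degree `k + 2` with constant coefficient `1` and remaining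
coefficients `a`; thus `a i` is the coefficient of `X ^ (i + 1)`. -/
noncomputable def normalForm (a : Fin k → ℂ) : ℂ[X] :=
  X ^ (k + 2) + (∑ i, C (a i) * X ^ ((i : ℕ) + 1) + 1)

theorem normalForm_tail_mem_degreeLT (a : Fin k → ℂ) :
    ∑ i, C (a i) * X ^ ((i : ℕ) + 1) + 1 ∈ degreeLT ℂ (k + 1) := by
  refine add_mem (sum_mem fun i _ => mem_degreeLT.2 ?_) (mem_degreeLT.2 ?_)
  · refine (degree_C_mul_X_pow_le _ _).trans_lt ?_
    exact_mod_cast Nat.succ_lt_succ i.2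
  · rw [degree_one]
    exact_mod_cast k.succ_pos

theorem degree_normalForm_tail_lt (a : Fin k → ℂ) :
    degree (∑ i, C (a i) * X ^ ((i : ℕ) + 1) + 1) < ((k + 2 : ℕ) : WithBot ℕ) :=
  mem_degreeLT.1 (degreeLT_mono (k + 1).le_succ (normalForm_tail_mem_degreeLT a))

theorem monic_normalForm (a : Fin k → ℂ) : (normalForm a).Monic :=
  monic_X_pow_add (degree_normalForm_tail_lt a)

theorem natDegree_normalForm (a : Fin k → ℂ) : (normalForm a).natDegree = k + 2 := by
  rw [normalForm, natDegree_add_eq_left_of_degree_lt, natDegree_X_pow]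
  rw [degree_X_pow]
  exact degree_normalForm_tail_lt a

theorem coeff_normalForm_zero (a : Fin k → ℂ) : (normalForm a).coeff 0 = 1 := by
  simp [normalForm, coeff_X_pow]

theorem coeff_normalForm_succ (a : Fin k → ℂ) (i : Fin k) : (normalForm a).coeff (i + 1) = a i := by
  have hi : (i : ℕ) ≠ k + 1 := by lia
  simp [normalForm, coeff_X_pow, coeff_one, Fin.val_inj, hi]

theorem normalForm_injective : Function.Injective (normalForm (k := k)) := fun a b hab => by
  ext i
  rw [← coeff_normalForm_succ a, hab, coeff_normalForm_succ]

theorem nextCoeff_normalForm (a : Fin k → ℂ) : (normalForm a).nextCoeff = 0 := by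
  rw [nextCoeff_of_natDegree_pos (by simp [natDegree_normalForm]), natDegree_normalForm, normalForm,
    coeff_add, coeff_X_pow, if_neg (by lia), zero_add]
  exact coeff_eq_zero_of_degree_lt (mem_degreeLT.1 (normalForm_tail_mem_degreeLT a))

theorem eq_normalForm {P : ℂ[X]} (hP : P.Monic) (hdeg : P.natDegree = k + 2) (h₀ : P.coeff 0 = 1)
    (hnext : P.nextCoeff = 0) : P = normalForm fun i : Fin k => P.coeff (i + 1) := by
  set a : Fin k → ℂ := fun i => P.coeff (i + 1)
  ext j
  rcases lt_trichotomy j (k + 1) with hj | rfl | hj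
  · rcases j with _ | j
    · rw [h₀, coeff_normalForm_zero]
    · exact (coeff_normalForm_succ a ⟨j, by lia⟩).symm
  · have hn := nextCoeff_normalForm a
    rw [nextCoeff_of_natDegree_pos (by lia), hdeg] at hnext
    rw [nextCoeff_of_natDegree_pos (by simp [natDegree_normalForm]), natDegree_normalForm] at hn
    exact hnext.trans hn.symm
  · rcases (Nat.succ_le_of_lt hj).eq_or_lt with rfl | hj
    · have hlead := hP.coeff_natDegree.trans (monic_normalForm a).coeff_natDegree.symm
      rwa [hdeg, natDegree_normalForm] at hlead
    · rw [coeff_eq_zero_of_natDegree_lt (by lia), coeff_eq_zero_of_natDegree_lt]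
      rwa [natDegree_normalForm]

theorem continuous_coeff_normalForm (j : ℕ) :
    Continuous fun a : Fin k → ℂ => (normalForm a).coeff j := by
  simp only [normalForm, coeff_add, finsetSum_coeff, coeff_C_mul]
  fun_prop

/-- The action of `ζ` on coefficient vectors by substituting `ζ X` for `X` in `normalForm`. -/
def twist (ζ : ℂ) (a : Fin k → ℂ) : Fin k → ℂ := fun i => ζ ^ ((i : ℕ) + 1) * a i

theorem twist_one (a : Fin k → ℂ) : twist 1 a = a := by
  ext i
  rw [twist, one_pow, one_mul]

theorem twist_inv_twist {ζ : ℂ} (hζ : ζ ≠ 0) (a : Fin k → ℂ) : twist ζ⁻¹ (twist ζ a) = a := by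
  ext i
  rw [twist, twist, ← mul_assoc, ← mul_pow, inv_mul_cancel₀ hζ, one_pow, one_mul]

theorem normalForm_comp {ζ : ℂ} (hζ : ζ ^ (k + 2) = 1) (a : Fin k → ℂ) :
    (normalForm a).comp (C ζ * X) = normalForm (twist ζ a) := by
  simp only [normalForm, twist, add_comp, pow_comp, X_comp, mul_pow, ← C_pow, hζ, C_1, one_mul,
    sum_comp, Polynomial.mul_comp, C_comp, one_comp, C_mul]
  congr! 3
  ring

end NormalForm

section CoefficientCoordinates

open Polynomial

variable {k : ℕ}

instance (n : ℕ) : Nonempty (OrdConfig n Set.univ) :=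
  ⟨⟨fun i => (i : ℕ), Nat.cast_injective.comp Fin.val_injective, fun _ => trivial⟩⟩

/-- The coefficient vectors `a` for which `normalForm a` has distinct roots. -/
def separableCoeffs (k : ℕ) : Set (Fin k → ℂ) :=
  {a | ∃ f : OrdConfig (k + 2) Set.univ, rootPoly f.1 = normalForm a}

/-- The class of the configuration of the roots of `normalForm a`, a junk value unless
`a ∈ separableCoeffs k`. -/
noncomputable def rootClass (a : Fin k → ℂ) : ConfigModAff (k + 2) :=
  configClass (Classical.epsilon fun f => rootPoly f.1 = normalForm a)

theorem rootClass_eq {f : OrdConfig (k + 2) Set.univ} {a : Fin k → ℂ}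
    (h : rootPoly f.1 = normalForm a) : rootClass a = configClass f := by
  have hε := Classical.epsilon_spec (p := fun f : OrdConfig (k + 2) Set.univ =>
    rootPoly f.1 = normalForm a) ⟨f, h⟩
  obtain ⟨τ, hτ⟩ := exists_perm_of_rootPoly_eq f.2.1 (hε.trans h.symm)
  exact configClass_eq_iff.2 ⟨τ, 0, 1, by ext i; simp [OrdConfig.affine, hτ]⟩

theorem sum_eq_zero_of_rootPoly_eq {f : Fin (k + 2) → ℂ} {a : Fin k → ℂ}
    (h : rootPoly f = normalForm a) : ∑ i, f i = 0 := by
  rw [← neg_eq_zero, ← nextCoeff_rootPoly, h, nextCoeff_normalForm]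

theorem exists_twist_eq_of_rootClass_eq {a b : Fin k → ℂ} (ha : a ∈ separableCoeffs k)
    (hb : b ∈ separableCoeffs k) (hab : rootClass a = rootClass b) :
    ∃ ζ : ℂ, ζ ^ (k + 2) = 1 ∧ twist ζ a = b := by
  obtain ⟨f, hf⟩ := ha
  obtain ⟨h, hh⟩ := hb
  rw [rootClass_eq hf, rootClass_eq hh, eq_comm] at hab
  obtain ⟨τ, c, β, hfh⟩ := configClass_eq_iff.1 hab
  have hc : c = 0 := by
    have hsum := sum_eq_zero_of_rootPoly_eq hf
    simp only [hfh, OrdConfig.affine, Finset.sum_add_distrib, ← Finset.mul_sum,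
      Equiv.sum_comp τ h.1, sum_eq_zero_of_rootPoly_eq hh, mul_zero, zero_add, Finset.sum_const,
      smul_eq_zero] at hsum
    exact hsum.resolve_left (by simp)
  have hsmul : f.1 = (β : ℂ) • (h.1 ∘ τ) := by ext i; simp [hfh, hc, OrdConfig.affine]
  have hcomp : (normalForm a).comp (C (β : ℂ) * X) = C ((β : ℂ) ^ (k + 2)) * normalForm b := by
    rw [← hf, hsmul, rootPoly_smul_comp, rootPoly_comp_perm, hh]
  have hβ : (β : ℂ) ^ (k + 2) = 1 := by
    have hcoeff := coeff_zero_rootPoly_smul (β : ℂ) (h.1 ∘ τ)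
    rw [← hsmul, rootPoly_comp_perm, hf, hh, coeff_normalForm_zero, coeff_normalForm_zero,
      mul_one] at hcoeff
    exact hcoeff.symm
  rw [normalForm_comp hβ, hβ, C_1, one_mul] at hcomp
  exact ⟨β, hβ, normalForm_injective hcomp⟩

theorem exists_rootPoly_eq_twist {f : OrdConfig (k + 2) Set.univ} {a : Fin k → ℂ}
    (hf : rootPoly f.1 = normalForm a) {ζ : ℂ} (hζ : ζ ^ (k + 2) = 1) :
    ∃ h, rootPoly h.1 = normalForm (twist ζ a) ∧ configClass h = configClass f := by
  have hζ0 : ζ ≠ 0 := by rintro rfl; simp at hζ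
  refine ⟨f.affine 1 0 (Units.mk0 ζ hζ0)⁻¹, ?_, (configClass_eq_iff.2 ⟨1, 0, _, rfl⟩).symm⟩
  have hsmul : f.1 = ζ • (f.affine 1 0 (Units.mk0 ζ hζ0)⁻¹).1 := by
    ext i; simp [OrdConfig.affine, hζ0]
  rw [← normalForm_comp hζ, ← hf, hsmul, rootPoly_smul_comp, hζ, C_1, one_mul]

theorem twist_mem_separableCoeffs {ζ : ℂ} (hζ : ζ ^ (k + 2) = 1) {a : Fin k → ℂ}
    (ha : a ∈ separableCoeffs k) : twist ζ a ∈ separableCoeffs k := by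
  obtain ⟨f, hf⟩ := ha
  obtain ⟨h, hh, -⟩ := exists_rootPoly_eq_twist hf hζ
  exact ⟨h, hh⟩

theorem rootClass_twist {ζ : ℂ} (hζ : ζ ^ (k + 2) = 1) (a : Fin k → ℂ) :
    rootClass (twist ζ a) = rootClass a := by
  by_cases ha : a ∈ separableCoeffs k
  · obtain ⟨f, hf⟩ := ha
    obtain ⟨h, hh, hclass⟩ := exists_rootPoly_eq_twist hf hζ
    rw [rootClass_eq hf, rootClass_eq hh, hclass]
  · have hζ0 : ζ ≠ 0 := by rintro rfl; simp at hζ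
    have ha' : twist ζ a ∉ separableCoeffs k := fun h => ha <| by
      have := twist_mem_separableCoeffs (ζ := ζ⁻¹) (by rw [inv_pow, hζ, inv_one]) h
      rwa [twist_inv_twist hζ0] at this
    have hnone {b : Fin k → ℂ} (hb : b ∉ separableCoeffs k) :
        (fun f : OrdConfig (k + 2) Set.univ => rootPoly f.1 = normalForm b) = fun _ => False :=
      funext fun f => eq_false fun h => hb ⟨f, h⟩
    rw [rootClass, rootClass, hnone ha, hnone ha']

theorem eventually_exists_orderedRoots {a : Fin k → ℂ} {f : OrdConfig (k + 2) Set.univ}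
    (hf : rootPoly f.1 = normalForm a) {O : Set (OrdConfig (k + 2) Set.univ)} (hO : O ∈ 𝓝 f) :
    ∀ᶠ b in 𝓝 a, ∃ h ∈ O, rootPoly h.1 = normalForm b := by
  obtain ⟨O', hO', hsub⟩ := mem_nhds_subtype _ _ _ |>.1 hO
  filter_upwards [eventually_exists_rootPoly_eq monic_normalForm natDegree_normalForm
    (fun j => (continuous_coeff_normalForm j).continuousAt) f.2.1 hf hO']
  rintro b ⟨h, hhO, hh, hhb⟩
  exact ⟨⟨h, hh, fun _ => trivial⟩, hsub hhO, hhb⟩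

theorem isOpen_separableCoeffs : IsOpen (separableCoeffs k) := isOpen_iff_mem_nhds.2 <| by
  rintro a ⟨f, hf⟩
  filter_upwards [eventually_exists_orderedRoots hf Filter.univ_mem]
  rintro b ⟨h, -, hh⟩
  exact ⟨h, hh⟩

theorem continuousAt_rootClass {a : Fin k → ℂ} (ha : a ∈ separableCoeffs k) :
    ContinuousAt rootClass a := by
  obtain ⟨f, hf⟩ := ha
  intro O hO
  rw [rootClass_eq hf, ← map_configClass_nhds] at hO
  rw [Filter.mem_map]
  filter_upwards [eventually_exists_orderedRoots hf hO]
  rintro b ⟨h, hhO, hh⟩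
  rwa [Set.mem_preimage, rootClass_eq hh]

/-- The translate of `f` with sum zero. -/
noncomputable def centred {n : ℕ} (f : Fin n → ℂ) : Fin n → ℂ := fun i => f i - (∑ j, f j) / n

theorem sum_centred (f : Fin (k + 2) → ℂ) : ∑ i, centred f i = 0 := by
  have : ((k + 2 : ℕ) : ℂ) ≠ 0 := Nat.cast_ne_zero.2 (by lia)
  simp only [centred, Finset.sum_sub_distrib, Finset.sum_const, Finset.card_univ, Fintype.card_fin,
    nsmul_eq_mul, mul_div_cancel₀ _ this, sub_self]

/-- A scalar whose power is the constant coefficient of `rootPoly (centred f)`. -/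
noncomputable def rootScale {n : ℕ} (f : Fin n → ℂ) : ℂ :=
  (rootPoly (centred f)).coeff 0 ^ (n : ℂ)⁻¹

/-- The configuration `f` moved by an affine map so that `rootPoly` becomes a `normalForm`. -/
noncomputable def normalizedRoots {n : ℕ} (f : Fin n → ℂ) : Fin n → ℂ := (rootScale f)⁻¹ • centred f

theorem rootPoly_normalizedRoots {f : Fin (k + 2) → ℂ} (hf : rootScale f ≠ 0) :
    rootPoly (normalizedRoots f) =
      normalForm fun i : Fin k => (rootPoly (normalizedRoots f)).coeff (i + 1) := by
  refine eq_normalForm (monic_rootPoly _) (natDegree_rootPoly _) ?_ ?_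
  · have hpow : rootScale f ^ (k + 2) = (rootPoly (centred f)).coeff 0 :=
      Complex.cpow_nat_inv_pow _ (by lia)
    rw [normalizedRoots, coeff_zero_rootPoly_smul, ← hpow, ← mul_pow, inv_mul_cancel₀ hf, one_pow]
  · simp only [nextCoeff_rootPoly, normalizedRoots, Pi.smul_apply, ← Finset.smul_sum, sum_centred,
      smul_zero, neg_zero]

theorem continuous_centred {n : ℕ} : Continuous (centred (n := n)) := by unfold centred; fun_prop

section NormalizedRoots

variable {f : Fin (k + 2) → ℂ} {a : Fin k → ℂ} (hf : rootPoly f = normalForm a)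
include hf

theorem centred_eq_self : centred f = f := by
  ext i
  simp only [centred, sum_eq_zero_of_rootPoly_eq hf, zero_div, sub_zero]

theorem rootScale_eq_one : rootScale f = 1 := by
  rw [rootScale, centred_eq_self hf, hf, coeff_normalForm_zero, one_cpow]

theorem continuousAt_rootScale : ContinuousAt rootScale f := by
  refine ContinuousAt.cpow ?_ continuousAt_const ?_
  · exact ((continuous_coeff_rootPoly 0).comp continuous_centred).continuousAt
  · rw [centred_eq_self hf, hf, coeff_normalForm_zero]
    exact one_mem_slitPlane

theorem normalizedRoots_eq_self : normalizedRoots f = f := by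
  rw [normalizedRoots, rootScale_eq_one hf, inv_one, one_smul, centred_eq_self hf]

theorem continuousAt_normalizedRoots : ContinuousAt normalizedRoots f :=
  ((continuousAt_rootScale hf).inv₀ (by simp [rootScale_eq_one hf])).smul
    continuous_centred.continuousAt

end NormalizedRoots

theorem eventually_configClass_mem_image {f : OrdConfig (k + 2) Set.univ} {a : Fin k → ℂ}
    (hf : rootPoly f.1 = normalForm a) {O : Set (Fin k → ℂ)} (hO : O ∈ 𝓝 a) :
    ∀ᶠ h in 𝓝 f, configClass h ∈ rootClass '' O := by
  have hscale : ∀ᶠ h in 𝓝 f.1, rootScale h ≠ 0 :=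
    (continuousAt_rootScale hf).eventually_ne (by simp [rootScale_eq_one hf])
  have hcoeff : ∀ᶠ h in 𝓝 f.1,
      (fun i : Fin k => (rootPoly (normalizedRoots h)).coeff (i + 1)) ∈ O := by
    refine (continuousAt_pi.2 fun i => (continuous_coeff_rootPoly _).continuousAt.comp
      (continuousAt_normalizedRoots hf)) (?_ : O ∈ 𝓝 _)
    simpa only [Function.comp_apply, normalizedRoots_eq_self hf, hf, coeff_normalForm_succ] using hO
  filter_upwards [continuous_subtype_val.continuousAt hscale,
    continuous_subtype_val.continuousAt hcoeff] with h hs hO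
  have hunit := inv_ne_zero hs
  let h' := h.affine 1 (-((rootScale h.1)⁻¹ * ((∑ j, h.1 j) / (k + 2 : ℕ)))) (Units.mk0 _ hunit)
  have hh' : h'.1 = normalizedRoots h.1 := by
    ext i
    simp [h', OrdConfig.affine, normalizedRoots, centred]
    ring
  refine ⟨_, hO, (rootClass_eq (f := h') ?_).trans (configClass_eq_iff.2 ⟨1, _, _, rfl⟩).symm⟩
  rw [hh', ← rootPoly_normalizedRoots hs]

theorem map_rootClass_nhds {a : Fin k → ℂ} (ha : a ∈ separableCoeffs k) :
    Filter.map rootClass (𝓝 a) = 𝓝 (rootClass a) := by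
  refine le_antisymm (continuousAt_rootClass ha) fun O hO => ?_
  obtain ⟨f, hf⟩ := ha
  rw [rootClass_eq hf, ← map_configClass_nhds, Filter.mem_map]
  filter_upwards [eventually_configClass_mem_image hf hO] with h hh
  exact Set.image_preimage_subset rootClass O hh

end CoefficientCoordinates

section Stabilizers

variable {k g : ℕ}

theorem eventually_pow_eq_one {q : Fin k → ℂ} {j : Fin k} (hq : q j ≠ 0) :
    ∀ᶠ p in 𝓝 (q, q), ∀ ζ : ℂ, ζ ^ (k + 2) = 1 → twist ζ p.1 = p.2 → ζ ^ ((j : ℕ) + 1) = 1 := by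
  have hne (ζ : ℂ) : ∀ᶠ p : (Fin k → ℂ) × (Fin k → ℂ) in 𝓝 (q, q),
      ζ ^ ((j : ℕ) + 1) ≠ 1 → twist ζ p.1 ≠ p.2 := by
    by_cases hζ : ζ ^ ((j : ℕ) + 1) = 1
    · simp [hζ]
    · filter_upwards [(isOpen_ne_fun (f := fun p : (Fin k → ℂ) × (Fin k → ℂ) => twist ζ p.1 j)
        (g := fun p => p.2 j) (by unfold twist; fun_prop) (by fun_prop)).mem_nhds
        (x := (q, q)) (by simpa [twist, hq] using hζ)] with p hp _ h
      exact hp (congrFun h j)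
  filter_upwards [(Finset.eventually_all (Polynomial.nthRootsFinset (k + 2) (1 : ℂ))).2
    fun ζ _ => hne ζ] with p hp ζ hζ htwist
  exact of_not_not fun hj => hp ζ ((Polynomial.mem_nthRootsFinset (by lia) 1).2 hζ) hj htwist

/-- Near `q`, only `g`-th roots of unity identify coefficient vectors. -/
def StabilizedBy (g : ℕ) (q : Fin k → ℂ) : Prop :=
  ∀ᶠ p in 𝓝 (q, q), ∀ ζ : ℂ, ζ ^ (k + 2) = 1 → twist ζ p.1 = p.2 → ζ ^ g = 1

theorem exists_stabilizedBy (hg : 0 < g) (hgk : g ≤ k ∨ g = k + 2) {W : Set (Fin k → ℂ)}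
    (hW : W ∈ 𝓝 0) :
    ∃ q ∈ W, StabilizedBy g q ∧ ∀ i : Fin k, ¬ g ∣ i + 1 → q i = 0 := by
  rcases hgk with hgk | rfl
  · let j : Fin k := ⟨g - 1, by lia⟩
    have hj : (j : ℕ) + 1 = g := Nat.sub_add_cancel hg
    have hsingle : ∀ᶠ δ : ℂ in 𝓝 0, Pi.single (M := fun _ => ℂ) j δ ∈ W :=
      (continuous_single (A := fun _ => ℂ) j).continuousAt (by rwa [Pi.single_zero])
    obtain ⟨δ, hδW, hδ⟩ := ((hsingle.filter_mono nhdsWithin_le_nhds).and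
      self_mem_nhdsWithin).exists (f := 𝓝[≠] (0 : ℂ))
    refine ⟨Pi.single j δ, hδW, ?_, fun i hi => ?_⟩
    · simpa only [StabilizedBy, hj] using
        eventually_pow_eq_one (q := Pi.single j δ) (j := j) (by rwa [Pi.single_eq_same])
    · rw [Pi.single_eq_of_ne]
      rintro rfl
      exact hi hj.symm.dvd
  · exact ⟨0, mem_of_mem_nhds hW, Filter.Eventually.of_forall fun p ζ hζ _ => hζ, fun _ _ => rfl⟩

theorem StabilizedBy.exists_mem_nhds {q : Fin k → ℂ} (hq : StabilizedBy g q) :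
    ∃ N ∈ 𝓝 q, ∀ a ∈ N ∩ separableCoeffs k, ∀ b ∈ N ∩ separableCoeffs k,
      rootClass a = rootClass b → ∃ ζ : ℂ, ζ ^ (k + 2) = 1 ∧ ζ ^ g = 1 ∧ twist ζ a = b := by
  rw [StabilizedBy, nhds_prod_eq] at hq
  obtain ⟨N, hN, hqN⟩ := Filter.mem_prod_self_iff.1 hq
  refine ⟨N, hN, fun a ha b hb hab => ?_⟩
  obtain ⟨ζ, hζ, htwist⟩ := exists_twist_eq_of_rootClass_eq ha.2 hb.2 hab
  exact ⟨ζ, hζ, hqN (Set.mk_mem_prod ha.1 hb.1) ζ hζ htwist, htwist⟩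

end Stabilizers

section Dimension

variable {k m : ℕ}

theorem mem_nhds_rootClass_preimage {Z : Type*} [TopologicalSpace Z]
    (Φ : OpenPartialHomeomorph (ConfigModAff (k + 2)) Z) {q : Fin k → ℂ}
    (hq : q ∈ separableCoeffs k) (hqΦ : rootClass q ∈ Φ.source) :
    separableCoeffs k ∩ rootClass ⁻¹' Φ.source ∈ 𝓝 q :=
  Filter.inter_mem (isOpen_separableCoeffs.mem_nhds hq)
    (continuousAt_rootClass hq (Φ.open_source.mem_nhds hqΦ))

theorem exists_openPartialHomeomorph_rootClass {N : Set (Fin k → ℂ)} (hN : IsOpen N)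
    (hNs : N ⊆ separableCoeffs k) (hinj : Set.InjOn rootClass N) :
    ∃ Ψ : OpenPartialHomeomorph (Fin k → ℂ) (ConfigModAff (k + 2)),
      Ψ.source = N ∧ ⇑Ψ = rootClass := by
  refine ⟨.ofContinuousOpenRestrict (hinj.bijOn_image.toPartialEquiv) ?_ ?_ hN, rfl, rfl⟩
  · exact fun a ha => (continuousAt_rootClass (hNs ha)).continuousWithinAt
  · rw [isOpenMap_iff_nhds_le]
    rintro ⟨a, ha⟩
    change 𝓝 (rootClass a) ≤ Filter.map (rootClass ∘ ((↑) : N → Fin k → ℂ)) (𝓝 ⟨a, ha⟩)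
    rw [← Filter.map_map, hN.isOpenEmbedding_subtypeVal.map_nhds_eq, map_rootClass_nhds (hNs ha)]

theorem two_mul_le_of_openPartialHomeomorph (hk : 0 < k) {B : Type*} [NormedAddCommGroup B]
    [NormedSpace ℝ B] [FiniteDimensional ℝ B]
    (Φ : OpenPartialHomeomorph (ConfigModAff (k + 2)) B) (h₀ : (0 : Fin k → ℂ) ∈ separableCoeffs k)
    (h₀Φ : rootClass (0 : Fin k → ℂ) ∈ Φ.source) : 2 * k ≤ Module.finrank ℝ B := by
  obtain ⟨q, ⟨hq, hqΦ⟩, hstab, -⟩ := exists_stabilizedBy one_pos (Or.inl hk)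
    (mem_nhds_rootClass_preimage Φ h₀ h₀Φ)
  obtain ⟨N, hN, hNstab⟩ := hstab.exists_mem_nhds
  obtain ⟨N', hN', hN'open, hqN'⟩ := mem_nhds_iff.1
    (Filter.inter_mem hN (isOpen_separableCoeffs.mem_nhds hq))
  have hinj : Set.InjOn rootClass N' := fun a ha b hb hab => by
    obtain ⟨ζ, -, hζ, htwist⟩ := hNstab a (hN' ha) b (hN' hb) hab
    rw [← htwist, ← pow_one ζ, hζ, twist_one]
  obtain ⟨Ψ, hΨ, hΨc⟩ := exists_openPartialHomeomorph_rootClass hN'open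
    (fun a ha => (hN' ha).2) hinj
  have hdim := finrank_le_of_openPartialHomeomorph (Ψ.trans Φ)
    ⟨q, by simpa [OpenPartialHomeomorph.trans_source, hΨ, hΨc] using ⟨hqN', hqΦ⟩⟩
  rwa [finrank_real_of_complex, Module.finrank_fin_fun] at hdim

end Dimension

section Modes

variable {k g : ℕ}

/-- The coefficients of `normalForm` that are invariant under twisting by `g`-th roots of unity. -/
abbrev FixedMode (k g : ℕ) : Type := {i : Fin k // g ∣ i + 1}

/-- The coefficients of `normalForm` that `g`-th roots of unity rotate nontrivially. -/
abbrev FreeMode (k g : ℕ) : Type := {i : Fin k // ¬ g ∣ i + 1}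

theorem card_fixedMode (k g : ℕ) : Fintype.card (FixedMode k g) = k / g := by
  rw [Fintype.card_subtype, ← Nat.card_multiples, Finset.card_filter, Finset.card_filter,
    Fin.sum_univ_eq_sum_range (fun i => if g ∣ i + 1 then 1 else 0)]

theorem twist_apply_of_dvd {ζ : ℂ} (hζ : ζ ^ g = 1) (a : Fin k → ℂ) {i : Fin k} (hi : g ∣ i + 1) :
    twist ζ a i = a i := by
  obtain ⟨d, hd⟩ := hi
  rw [twist, hd, pow_mul, hζ, one_pow, one_mul]

/-- The powers of the free modes with exponents `M`, chosen so that twisting multiplies all of them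
by the same root of unity. -/
def freePowers (g : ℕ) (M : ℕ → ℕ) (a : Fin k → ℂ) : FreeMode k g → ℂ := fun i => a i ^ M (i + 1)

theorem freePowers_twist {M : ℕ → ℕ} (hM : ∀ e, ¬ g ∣ e → e * M e ≡ M 1 [MOD g]) {ζ : ℂ}
    (hζ : ζ ^ g = 1) (a : Fin k → ℂ) : freePowers g M (twist ζ a) = ζ ^ M 1 • freePowers g M a := by
  ext i
  rw [freePowers, twist, mul_pow, ← pow_mul, pow_eq_pow_mod _ hζ, hM _ i.2, ← pow_eq_pow_mod _ hζ]
  rfl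

theorem branchedCoordinates_rootClass [NeZero g] {A : Type*} [TopologicalSpace A]
    {N : Set (Fin k → ℂ)} (hN : IsOpen N) (hNs : N ⊆ separableCoeffs k)
    (htwist : ∀ a ∈ N, ∀ b ∈ N, rootClass a = rootClass b → ∃ ζ : ℂ, ζ ^ g = 1 ∧ twist ζ a = b)
    {ψ : (FixedMode k g → ℂ) → A} (hψ : Continuous ψ) {M : ℕ → ℕ}
    (hM : ∀ e, ¬ g ∣ e → e * M e ≡ M 1 [MOD g]) :
    BranchedCoordinates g rootClass N (fun a => ψ fun i => a i) (freePowers g M) where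
  isOpen := hN
  map_nhds a ha := map_rootClass_nhds (hNs ha)
  continuousOn_fst := (hψ.comp (by fun_prop)).continuousOn
  continuousOn_snd := by unfold freePowers; fun_prop
  fst_eq a ha b hb hab := by
    obtain ⟨ζ, hζ, rfl⟩ := htwist a ha b hb hab
    exact congrArg ψ (funext fun i => (twist_apply_of_dvd hζ a i.2).symm)
  exists_smul_snd_eq a ha b hb hab := by
    obtain ⟨ζ, hζ, rfl⟩ := htwist a ha b hb hab
    refine ⟨rootsOfUnity.mkOfPowEq (ζ ^ M 1) (by rw [pow_right_comm, hζ, one_pow]), ?_⟩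
    rw [freePowers_twist hM hζ, Subgroup.smul_def, Units.smul_def, rootsOfUnity.val_mkOfPowEq_coe]

end Modes

section Slice

variable {k g s : ℕ}

/-- Extends a parametrization `L` of the fixed modes by a complex parameter for the coefficient
of `X`. -/
noncomputable def modeSlice (L : (Fin s → ℝ) →L[ℝ] FixedMode k g → ℂ) :
    (Fin s → ℝ) × ℂ →L[ℝ] Fin k → ℂ :=
  ContinuousLinearMap.pi fun i =>
    if h : g ∣ i + 1 then (ContinuousLinearMap.proj ⟨i, h⟩ ∘L L) ∘L .fst ℝ _ _
    else if (i : ℕ) = 0 then .snd ℝ _ _ else 0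

variable {L : (Fin s → ℝ) →L[ℝ] FixedMode k g → ℂ}

theorem modeSlice_fixed (x : (Fin s → ℝ) × ℂ) (i : FixedMode k g) : modeSlice L x i = L x.1 i := by
  simp [modeSlice, i.2]

theorem modeSlice_free (x : (Fin s → ℝ) × ℂ) {i : Fin k} (hi : ¬ g ∣ i + 1) :
    modeSlice L x i = if (i : ℕ) = 0 then x.2 else 0 := by
  simp only [modeSlice, ContinuousLinearMap.coe_pi', hi, dite_false]
  split_ifs <;> simp

theorem twist_add_smul_modeSlice {q : Fin k → ℂ} (hq : ∀ i : Fin k, ¬ g ∣ i + 1 → q i = 0) {ζ : ℂ}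
    (hζ : ζ ^ g = 1) (r : ℝ) (z : Fin s → ℝ) (w : ℂ) :
    twist ζ (q + r • modeSlice L (z, w)) = q + r • modeSlice L (z, ζ * w) := by
  ext i
  by_cases hi : g ∣ i + 1
  · rw [twist_apply_of_dvd hζ _ hi]
    simp [modeSlice_fixed _ (⟨i, hi⟩ : FixedMode k g)]
  · by_cases hi₀ : (i : ℕ) = 0 <;> simp [twist, modeSlice_free _ hi, hq i hi, hi₀]
    ring

end Slice

section Core

variable {k g m : ℕ}

theorem exists_open_stabilized {Z : Type*} [TopologicalSpace Z]
    (Φ : OpenPartialHomeomorph (ConfigModAff (k + 2)) Z) (h₀ : (0 : Fin k → ℂ) ∈ separableCoeffs k)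
    (h₀Φ : rootClass (0 : Fin k → ℂ) ∈ Φ.source) (hg : 0 < g) (hgk : g ≤ k ∨ g = k + 2) :
    ∃ q : Fin k → ℂ, (∀ i : Fin k, ¬ g ∣ i + 1 → q i = 0) ∧ ∃ N : Set (Fin k → ℂ), IsOpen N ∧
      q ∈ N ∧ N ⊆ separableCoeffs k ∧ Set.MapsTo rootClass N Φ.source ∧
      ∀ a ∈ N, ∀ b ∈ N, rootClass a = rootClass b → ∃ ζ : ℂ, ζ ^ g = 1 ∧ twist ζ a = b := by
  obtain ⟨q, ⟨hq, hqΦ⟩, hstab, hq₀⟩ := exists_stabilizedBy hg hgk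
    (mem_nhds_rootClass_preimage Φ h₀ h₀Φ)
  obtain ⟨N, hN, hNstab⟩ := hstab.exists_mem_nhds
  obtain ⟨N', hN', hN'open, hqN'⟩ := mem_nhds_iff.1
    (Filter.inter_mem hN (mem_nhds_rootClass_preimage Φ hq hqΦ))
  refine ⟨q, hq₀, N', hN'open, hqN', fun a ha => (hN' ha).2.1, fun a ha => (hN' ha).2.2,
    fun a ha b hb hab => ?_⟩
  obtain ⟨ζ, -, hζ⟩ := hNstab a ⟨(hN' ha).1, (hN' ha).2.1⟩ b ⟨(hN' hb).1, (hN' hb).2.1⟩ hab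
  exact ⟨ζ, hζ⟩

theorem eq_of_freePowers_eq_zero {M : ℕ → ℕ} (hM₀ : ∀ e, ¬ g ∣ e → M e ≠ 0) {a q : Fin k → ℂ}
    (hfixed : ∀ i : FixedMode k g, a i = q i) (hq : ∀ i : Fin k, ¬ g ∣ i + 1 → q i = 0)
    (ha : freePowers g M a = 0) : a = q := by
  ext i
  by_cases hi : g ∣ i + 1
  · exact hfixed ⟨i, hi⟩
  · rw [hq i hi]
    exact (pow_eq_zero_iff (hM₀ _ hi)).1 (congrFun ha ⟨i, hi⟩)

theorem freePowers_add_smul_modeSlice {s : ℕ} {L : (Fin s → ℝ) →L[ℝ] FixedMode k g → ℂ}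
    {M : ℕ → ℕ} (hM₀ : ∀ e, ¬ g ∣ e → M e ≠ 0) {q : Fin k → ℂ}
    (hq : ∀ i : Fin k, ¬ g ∣ i + 1 → q i = 0) (r : ℝ) (z : Fin s → ℝ) (w : ℂ) :
    freePowers g M (q + r • modeSlice L (z, w)) =
      w ^ M 1 • fun i : FreeMode k g => if (i : ℕ) = 0 then (r : ℂ) ^ M 1 else 0 := by
  ext i
  rw [freePowers, Pi.add_apply, Pi.smul_apply, hq i i.2, modeSlice_free _ i.2]
  by_cases hi : (i : ℕ) = 0
  · simp [hi, mul_pow, mul_comm]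
  · simp [hi, hM₀ _ i.2]

theorem le_or_eq_add_two_of_dvd (hg : 2 ≤ g) (hgk : g ∣ k + 2) : g ≤ k ∨ g = k + 2 := by
  obtain ⟨d, hd⟩ := hgk
  rcases d with _ | _ | d
  · lia
  · exact Or.inr (by lia)
  · exact Or.inl (by nlinarith)

theorem dvd_of_openPartialHomeomorph (hg : 2 ≤ g) (hgk : g ∣ k + 2) (hcard : k / g + 1 < k)
    {M : ℕ → ℕ} (hM₀ : ∀ e, ¬ g ∣ e → M e ≠ 0) (hM : ∀ e, ¬ g ∣ e → e * M e ≡ M 1 [MOD g])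
    {B : Type*} [NormedAddCommGroup B] [NormedSpace ℝ B] [FiniteDimensional ℝ B]
    (Φ : OpenPartialHomeomorph (ConfigModAff (k + 2)) B) (h₀ : (0 : Fin k → ℂ) ∈ separableCoeffs k)
    (h₀Φ : rootClass (0 : Fin k → ℂ) ∈ Φ.source) : g ∣ M 1 := by
  have : NeZero g := ⟨by lia⟩
  obtain ⟨q, hq, N, hN, hqN, hNs, hNΦ, htwist⟩ :=
    exists_open_stabilized Φ h₀ h₀Φ (by lia) (le_or_eq_add_two_of_dvd hg hgk)
  let L : (Fin (2 * (k / g)) → ℝ) ≃L[ℝ] (FixedMode k g → ℂ) := ContinuousLinearEquiv.ofFinrankEq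
    (by rw [finrank_real_of_complex, Module.finrank_fintype_fun_eq_card,
      Module.finrank_fintype_fun_eq_card, card_fixedMode, Fintype.card_fin])
  obtain ⟨r, hr, hrN⟩ := exists_pos_forall_add_smul_mem (modeSlice L.toContinuousLinearMap)
    (hN.mem_nhds hqN) 2
  have hbranched := branchedCoordinates_rootClass hN hNs htwist
    (ψ := fun v => r⁻¹ • L.symm fun i => v i - q i)
    ((L.symm.continuous.comp (by fun_prop)).const_smul r⁻¹) hM
  have hdim : 2 * (k / g) + 2 < Module.finrank ℝ B := by
    have := two_mul_le_of_openPartialHomeomorph (by lia) Φ h₀ h₀Φ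
    lia
  refine hbranched.dvd hdim Φ hNΦ (G := fun z w => q + r • modeSlice L.toContinuousLinearMap (z, w))
    (by fun_prop) (fun z w hz hw => hrN _ (max_le (hz.trans one_le_two) hw)) (fun z w ζ => ?_)
    (fun z w => ?_) (fun he => ?_) (freePowers_add_smul_modeSlice hM₀ hq r)
    (fun a _ hu hσ => congrArg rootClass ?_)
  · have hζ : ((ζ : ℂˣ) : ℂ) ^ g = 1 := (mem_rootsOfUnity' g _).1 ζ.2
    have hζk : ((ζ : ℂˣ) : ℂ) ^ (k + 2) = 1 := by
      obtain ⟨d, hd⟩ := hgk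
      rw [hd, pow_mul, hζ, one_pow]
    rw [Subgroup.smul_def, Units.smul_def, smul_eq_mul, ← twist_add_smul_modeSlice hq hζ,
      rootClass_twist hζk]
  · have hz : (fun i : FixedMode k g =>
        (q + r • modeSlice L.toContinuousLinearMap (z, w)) i - q i) = r • L z := by
      ext i
      rw [Pi.add_apply, Pi.smul_apply, modeSlice_fixed, add_sub_cancel_left]
      rfl
    rw [hz, map_smul, L.symm_apply_apply, inv_smul_smul₀ hr.ne']
  · have := congrFun he ⟨⟨0, by lia⟩, by simpa using (show g ≠ 1 by lia)⟩
    simp [hr.ne'] at this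
  · have hL : (fun i : FixedMode k g => a i - q i) = 0 := by simpa [hr.ne'] using hu
    simpa only [← Prod.zero_eq_mk, map_zero, smul_zero, add_zero] using
      eq_of_freePowers_eq_zero hM₀ (fun i => sub_eq_zero.1 (congrFun hL i)) hq hσ

end Core

section Manifold

variable {k : ℕ}

theorem rootPoly_eq_normalForm_zero {f : OrdConfig (k + 2) Set.univ}
    (hf : ∀ i, f.1 i ^ (k + 2) + 1 = 0) : rootPoly f.1 = normalForm (0 : Fin k → ℂ) :=
  rootPoly_eq_of_isRoot f.2.1 (monic_normalForm 0) (natDegree_normalForm 0) fun i => by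
    simpa [normalForm] using hf i

theorem exists_openPartialHomeomorph_of_homeomorph {X Y : Type*} [TopologicalSpace X]
    [TopologicalSpace Y] {U : Set X} {V : Set Y} (hU : IsOpen U) (hV : IsOpen V) (φ : U ≃ₜ V)
    (hne : U.Nonempty) : ∃ Φ : OpenPartialHomeomorph X Y, Φ.source = U := by
  let U' : TopologicalSpace.Opens X := ⟨U, hU⟩
  let V' : TopologicalSpace.Opens Y := ⟨V, hV⟩
  let φ' : U' ≃ₜ V' := φ
  have hU' : Nonempty U' := hne.to_subtype
  have hV' : Nonempty V' := hU'.map φ'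
  refine ⟨((U'.openPartialHomeomorphSubtypeCoe hU').symm.trans φ'.toOpenPartialHomeomorph).trans
    (V'.openPartialHomeomorphSubtypeCoe hV'), ?_⟩
  simp [U']

theorem exists_freePowers_exponents (hk : 2 ≤ k) : ∃ g : ℕ, 2 ≤ g ∧ g ∣ k + 2 ∧ k / g + 1 < k ∧
    ∃ M : ℕ → ℕ, (∀ e, ¬ g ∣ e → M e ≠ 0) ∧ (∀ e, ¬ g ∣ e → e * M e ≡ M 1 [MOD g]) ∧ ¬ g ∣ M 1 := by
  rcases hk.eq_or_lt with rfl | hk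
  · refine ⟨4, by norm_num, by norm_num, by norm_num, fun e => if e % 4 = 2 then 1 else 2,
      fun e _ => ?_, fun e he => ?_, by norm_num⟩
    · dsimp only; split_ifs <;> norm_num
    · rw [Nat.ModEq]; dsimp only; split_ifs <;> lia
  · have hp : (k + 2).minFac.Prime := Nat.minFac_prime (by lia)
    have hdiv : k / (k + 2).minFac ≤ k / 2 := Nat.div_le_div_left hp.two_le two_pos
    refine ⟨(k + 2).minFac, hp.two_le, Nat.minFac_dvd _, by lia,
      fun e => e ^ ((k + 2).minFac - 2), fun e he => ?_, fun e he => ?_, ?_⟩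
    · exact pow_ne_zero _ (by rintro rfl; exact he (dvd_zero _))
    · have hpred : (k + 2).minFac - 2 + 1 = (k + 2).minFac - 1 := by have := hp.two_le; lia
      dsimp only
      rw [← pow_succ', hpred, one_pow, ← Nat.totient_prime hp]
      exact Nat.ModEq.pow_totient ((hp.coprime_iff_not_dvd.2 he).symm)
    · simp [hp.ne_one]

end Manifold

/-- For `n ≥ 4`, the orbit space `C_n(ℂ)/(ℂ⋊ℂ*) ≅ M_{0,n+1}/Σ_n` is not a topological
manifold: the class `p` of the configuration of the `n` roots of `z^n + 1` admits no open
neighborhood homeomorphic to an open subset of `ℝ^m` for any `m`. -/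
theorem configModAff_not_manifold (n : ℕ) (hn : 4 ≤ n)
    (f : OrdConfig n Set.univ) (hf : ∀ i, f.1 i ^ n + 1 = 0) :
    ¬ ∃ (U : Set (ConfigModAff n)) (m : ℕ) (V : Set (Fin m → ℝ)),
        IsOpen U ∧ Quot.mk _ (Quot.mk _ f) ∈ U ∧ IsOpen V ∧ Nonempty (↥U ≃ₜ ↥V) := by
  rintro ⟨U, m, V, hU, hfU, hV, ⟨φ⟩⟩
  obtain ⟨k, rfl⟩ : ∃ k, n = k + 2 := Nat.exists_eq_add_of_le' (by lia)
  obtain ⟨Φ, rfl⟩ := exists_openPartialHomeomorph_of_homeomorph hU hV φ ⟨_, hfU⟩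
  have hroots := rootPoly_eq_normalForm_zero hf
  obtain ⟨g, hg, hgk, hcard, M, hM₀, hM, hgM⟩ := exists_freePowers_exponents (k := k) (by lia)
  refine hgM (dvd_of_openPartialHomeomorph hg hgk hcard hM₀ hM Φ ⟨f, hroots⟩ ?_)
  rwa [rootClass_eq hroots]
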